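/- arXiv:2008.09143 — 3 statements merged into one kernel-verified Lean document; each statement's English description precedes it below -/
import Mathlib

section
/- Fix c > 0 and an integer k ≥ 3, and let p(n) = c/n. For 3 ≤ j ≤ k let X_{n,j} denote the number of cycles of length j in G(n,p(n)) (the number of subgraphs isomorphic to the j-cycle). Then (X_{n,3},…,X_{n,k}) converges jointly in distribution, as n → ∞, to independent Poisson random variables with respective means λ_j = c^j/(2j); that is, for all non-negative integers b_3,…,b_k, lim_{n→∞} P(X_{n,3}=b_3 ∧ … ∧ X_{n,k}=b_k) = ∏_{j=3}^{k} e^{−λ_j}·λ_j^{b_j}/b_j!. -/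
/-!
The proof is a Stein-type argument. Write `X_j` for the number of `j`-cycles and `2j X_j` for the
number of labelled ones, that is, of injections `f : Fin j ↪ Fin n` whose cycle lies in `G`
(`card_copies`). Since forcing a subgraph `H` into `G(n,p)` costs `p ^ |E(H)|` and otherwise replaces
`G` by `G ⊔ H` (`gEx_subgraph`),

  `2j b_j P(X = b) = E[2j X_j 1(X = b)] = ∑_f p ^ j P(X(G ⊔ f) = b)`.

Adding the cycle `f` to `G` typically creates just that one cycle. The exceptions are that `f` was
already present, or that a cycle sharing some but not all of its edges with `f` appears. Such a cycle
has more edges than vertices outside `f` (`card_outside_lt`), so the exceptions have probability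
`O(p) = O(1/n)` (`sum_badCopies_le`). The sum over `f` has `n (n - 1) ⋯ (n - j + 1)` terms, whence
`b_j P(X = b) = λ_j P(X = b - e_j) + o(1)` with `λ_j = c ^ j / (2j)` (`recurrence`).

This is the recurrence satisfied by Poisson probabilities. Together with tightness, which is Markov's
inequality (`tail_bound`), it identifies the limit in one coordinate once the total mass is known
(`tendsto_poisson_of_recurrence`); the total mass for the coordinates in `insert j A` is the
probability for those in `A`, so the joint limit follows by induction on the set of cycle lengths
(`tendsto_gEx_ev`).
-/

open Filter Topology

/-- Probability weight of a given graph outcome in `G(n,p)`. -/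
noncomputable def gWeight (n : ℕ) (p : ℝ) (G : SimpleGraph (Fin n)) : ℝ :=
  p ^ G.edgeSet.ncard * (1 - p) ^ (n.choose 2 - G.edgeSet.ncard)

open scoped Classical in
/-- Probability of the event `A` under the binomial random graph `G(n,p)`. -/
noncomputable def gProb (n : ℕ) (p : ℝ) (A : SimpleGraph (Fin n) → Prop) : ℝ :=
  ∑ᶠ G : SimpleGraph (Fin n), if A G then gWeight n p G else 0

/-- Expectation of `f` under the binomial random graph `G(n,p)`. -/
noncomputable def gExp (n : ℕ) (p : ℝ) (f : SimpleGraph (Fin n) → ℝ) : ℝ :=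
  ∑ᶠ G : SimpleGraph (Fin n), gWeight n p G * f G

/-- The number of cycles of length `j` in `G`: the number of subgraphs of `G` isomorphic to
the cycle graph on `j` vertices. -/
noncomputable def cycleCount {n : ℕ} (j : ℕ) (G : SimpleGraph (Fin n)) : ℕ :=
  Set.ncard {H : G.Subgraph | Nonempty (H.coe ≃g SimpleGraph.cycleGraph j)}

open SimpleGraph Finset

/-! ### Expectations under `G(n,p)` -/

open scoped Classical in
/-- Expectation of `φ` under `G(n,p)`, written as a finite sum over all graphs on `Fin n`. -/
noncomputable def gEx (n : ℕ) (p : ℝ) (φ : SimpleGraph (Fin n) → ℝ) : ℝ :=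
  ∑ G : SimpleGraph (Fin n), gWeight n p G * φ G

lemma edgeSet_ncard_le {n : ℕ} (G : SimpleGraph (Fin n)) : G.edgeSet.ncard ≤ n.choose 2 := by
  classical
  rw [← coe_edgeFinset, Set.ncard_coe_finset]
  simpa using G.card_edgeFinset_le_card_choose_two

lemma gWeight_nonneg {n : ℕ} {p : ℝ} (h0 : 0 ≤ p) (h1 : p ≤ 1) (G : SimpleGraph (Fin n)) :
    0 ≤ gWeight n p G := by
  have : 0 ≤ 1 - p := by linarith
  unfold gWeight; positivity

lemma gEx_mono {n : ℕ} {p : ℝ} (h0 : 0 ≤ p) (h1 : p ≤ 1) {φ ψ : SimpleGraph (Fin n) → ℝ}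
    (h : ∀ G, φ G ≤ ψ G) : gEx n p φ ≤ gEx n p ψ :=
  Finset.sum_le_sum fun G _ => mul_le_mul_of_nonneg_left (h G) (gWeight_nonneg h0 h1 G)

lemma gEx_sum {n : ℕ} {p : ℝ} {ι : Type*} (s : Finset ι) (φ : ι → SimpleGraph (Fin n) → ℝ) :
    gEx n p (fun G => ∑ i ∈ s, φ i G) = ∑ i ∈ s, gEx n p (φ i) := by
  unfold gEx
  rw [Finset.sum_comm]
  simp [Finset.mul_sum]

lemma gEx_add {n : ℕ} {p : ℝ} (φ ψ : SimpleGraph (Fin n) → ℝ) :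
    gEx n p (fun G => φ G + ψ G) = gEx n p φ + gEx n p ψ := by
  simp [gEx, mul_add, Finset.sum_add_distrib]

lemma gEx_sub {n : ℕ} {p : ℝ} (φ ψ : SimpleGraph (Fin n) → ℝ) :
    gEx n p (fun G => φ G - ψ G) = gEx n p φ - gEx n p ψ := by
  simp [gEx, mul_sub, Finset.sum_sub_distrib]

lemma gEx_const_mul {n : ℕ} {p : ℝ} (a : ℝ) (φ : SimpleGraph (Fin n) → ℝ) :
    gEx n p (fun G => a * φ G) = a * gEx n p φ := by
  simp only [gEx, Finset.mul_sum]
  exact Finset.sum_congr rfl fun _ _ => by ring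

lemma abs_gEx_le {n : ℕ} {p : ℝ} (h0 : 0 ≤ p) (h1 : p ≤ 1) (φ : SimpleGraph (Fin n) → ℝ) :
    |gEx n p φ| ≤ gEx n p (fun G => |φ G|) := by
  unfold gEx
  refine (Finset.abs_sum_le_sum_abs _ _).trans_eq (Finset.sum_congr rfl fun G _ => ?_)
  rw [abs_mul, abs_of_nonneg (gWeight_nonneg h0 h1 G)]

open scoped Classical in
lemma gProb_eq_gEx {n : ℕ} {p : ℝ} (A : SimpleGraph (Fin n) → Prop) :
    gProb n p A = gEx n p (fun G => if A G then 1 else 0) := by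
  unfold gProb gEx
  rw [finsum_eq_sum_of_fintype]
  simp

/-- The weights of `G(n,p)` sum to `1`: graphs correspond to subsets of the edge set of the complete
graph, so this is the binomial theorem for `p + (1 - p)`. -/
lemma gEx_one (n : ℕ) (p : ℝ) : gEx n p (fun _ => 1) = 1 := by
  classical
  unfold gEx gWeight
  have h := Finset.sum_pow_mul_eq_add_pow p (1 - p) (⊤ : SimpleGraph (Fin n)).edgeFinset
  rw [card_edgeFinset_top_eq_card_choose_two] at h
  simp only [Fintype.card_fin, add_sub_cancel, one_pow] at h
  refine Eq.trans ?_ h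
  refine Finset.sum_bij' (fun G _ => G.edgeFinset)
    (fun s _ => fromEdgeSet (s : Set (Sym2 (Fin n)))) ?_ ?_ ?_ ?_ ?_
  · intro G _
    rw [Finset.mem_powerset]
    exact edgeFinset_mono le_top
  · simp
  · intro G _
    simp
  · intro s hs
    have hs' : ∀ e ∈ s, ¬ e.IsDiag := by
      intro e he
      have := Finset.mem_powerset.1 hs he
      simpa using this
    ext e
    simp only [mem_edgeFinset, edgeSet_fromEdgeSet]
    simp
    exact hs' e
  · intro G _
    rw [← coe_edgeFinset, Set.ncard_coe_finset, mul_one]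

open scoped Classical in
/-- Forcing a single edge: restricting to graphs that contain `e` costs a factor `p` and otherwise
amounts to adding `e` to the random graph. Graphs with and without `e` are paired by toggling `e`,
and `p * w(G - e) = (1 - p) * w(G)` when `e ∈ G`. -/
lemma gEx_edge {n : ℕ} {p : ℝ} {e : Sym2 (Fin n)} (he : ¬ e.IsDiag)
    (φ : SimpleGraph (Fin n) → ℝ) :
    gEx n p (fun G => if e ∈ G.edgeSet then φ G else 0) =
      p * gEx n p (fun G => φ (G ⊔ fromEdgeSet {e})) := by
  unfold gEx
  -- `G ↦ G ⊔ e` is a bijection from the graphs avoiding `e` to those containing it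
  have key : ∑ G with e ∉ G.edgeSet, gWeight n p G * φ (G ⊔ fromEdgeSet {e}) =
      ∑ G with e ∈ G.edgeSet, gWeight n p (G \ fromEdgeSet {e}) * φ G := by
    refine Finset.sum_bij' (fun G _ => G ⊔ fromEdgeSet {e}) (fun G _ => G \ fromEdgeSet {e})
      ?_ ?_ ?_ ?_ ?_
    · intro G _
      simp [he]
    · intro G _
      simp
    · intro G hG
      simp only [Finset.mem_filter, Finset.mem_univ, true_and] at hG
      rw [sup_sdiff_right_self, sdiff_eq_left]
      rw [← disjoint_edgeSet]
      exact (Set.disjoint_singleton_right.2 hG).mono_right (by simp)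
    · intro G hG
      simp only [Finset.mem_filter, Finset.mem_univ, true_and] at hG
      rw [sdiff_sup_cancel]
      rw [← edgeSet_subset_edgeSet]
      simp [he, hG]
    · intro G hG
      simp only [Finset.mem_filter, Finset.mem_univ, true_and] at hG
      congr 2
      rw [sup_sdiff_right_self, eq_comm, sdiff_eq_left]
      rw [← disjoint_edgeSet]
      exact (Set.disjoint_singleton_right.2 hG).mono_right (by simp)
  rw [← Finset.sum_filter_add_sum_filter_not univ (fun G : SimpleGraph (Fin n) => e ∈ G.edgeSet)
    (fun G => gWeight n p G * φ (G ⊔ fromEdgeSet {e})), key, ← Finset.sum_add_distrib,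
    Finset.mul_sum]
  simp only [mul_ite, mul_zero]
  rw [← Finset.sum_filter]
  refine Finset.sum_congr rfl fun G hG => ?_
  simp only [Finset.mem_filter, Finset.mem_univ, true_and] at hG
  have h1 : G ⊔ fromEdgeSet {e} = G := by
    rw [sup_eq_left, ← edgeSet_subset_edgeSet]; simp [he, hG]
  have h2 : (G \ fromEdgeSet {e}).edgeSet.ncard + 1 = G.edgeSet.ncard := by
    rw [edgeSet_sdiff, edgeSet_fromEdgeSet]
    have : ({e} : Set (Sym2 (Fin n))) \ Sym2.diagSet = {e} := by
      ext x; simp; rintro rfl; exact he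
    rw [this, Set.ncard_sdiff_singleton_add_one hG (Set.toFinite _)]
  have h3 : p * gWeight n p (G \ fromEdgeSet {e}) = (1 - p) * gWeight n p G := by
    unfold gWeight
    have h4 := edgeSet_ncard_le G
    have h5 : n.choose 2 - (G \ fromEdgeSet {e}).edgeSet.ncard =
      (n.choose 2 - G.edgeSet.ncard) + 1 := by omega
    rw [h5, ← h2]
    ring
  rw [h1, mul_add, ← mul_assoc p (gWeight n p (G \ _)), h3]
  ring

open scoped Classical in
/-- Conditioning on `H ≤ G` is the same as replacing `G` by `G ⊔ H`, up to the factor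
`P(H ≤ G) = p ^ |E(H)|`; the case of one edge is iterated over the edges of `H`. -/
lemma gEx_subgraph {n : ℕ} {p : ℝ} (H : SimpleGraph (Fin n)) (φ : SimpleGraph (Fin n) → ℝ) :
    gEx n p (fun G => if H ≤ G then φ G else 0) =
      p ^ H.edgeSet.ncard * gEx n p (fun G => φ (G ⊔ H)) := by
  induction hm : H.edgeSet.ncard generalizing H φ with
  | zero =>
    have : H = ⊥ := by
      rwa [Set.ncard_eq_zero (Set.toFinite _), edgeSet_eq_empty] at hm
    subst this
    simp
  | succ m ih =>
    obtain ⟨e, he⟩ : H.edgeSet.Nonempty := by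
      rw [Set.nonempty_iff_ne_empty]; intro h; simp [h] at hm
    have hd : ¬ e.IsDiag := H.not_isDiag_of_mem_edgeSet he
    have hse : (fromEdgeSet {e}).edgeSet = {e} := by
      ext x; simp; rintro rfl; exact hd
    set H' := H \ fromEdgeSet {e} with hH'
    have hsup : H' ⊔ fromEdgeSet {e} = H := by
      rw [hH', sdiff_sup_cancel]
      rw [← edgeSet_subset_edgeSet, hse]
      simpa using he
    have hcard : H'.edgeSet.ncard = m := by
      rw [hH', edgeSet_sdiff, hse, Set.ncard_sdiff_singleton_of_mem he, hm]; rfl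
    have h1 : ∀ G, (H ≤ G) ↔ (e ∈ G.edgeSet ∧ H' ≤ G) := by
      intro G
      conv_lhs => rw [← hsup, sup_le_iff, ← edgeSet_subset_edgeSet (G₁ := fromEdgeSet {e}), hse]
      rw [Set.singleton_subset_iff, and_comm]
    have h2 : ∀ G, (H' ≤ G ⊔ fromEdgeSet {e}) ↔ H' ≤ G := by
      intro G
      constructor
      · intro h
        rw [sup_comm, ← sdiff_le_iff] at h
        rwa [hH', _root_.sdiff_idem] at h
      · exact fun h => h.trans le_sup_left
    have h3 : ∀ G, G ⊔ H' ⊔ fromEdgeSet {e} = G ⊔ H := by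
      intro G; rw [sup_assoc, hsup]
    simp only [h1, ite_and]
    rw [gEx_edge hd]
    simp only [h2]
    rw [ih H' (fun G => φ (G ⊔ fromEdgeSet {e})) hcard]
    simp only [h3]
    ring

/-! ### Cycles as injective maps `Fin j ↪ Fin n` -/

/-- The `j`-cycle on vertices `f 0, f 1, …, f (j - 1)`, as a graph on `Fin n`. -/
abbrev cyc {n : ℕ} (j : ℕ) (f : Fin j ↪ Fin n) : SimpleGraph (Fin n) := (cycleGraph j).map f

open scoped Classical in
/-- The labelled `j`-cycles of `K`: injections `Fin j ↪ Fin n` whose cycle is contained in `K`.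
For `j ≥ 3`, each `j`-cycle of `K` is counted `2 * j` times. -/
noncomputable def copies {n : ℕ} (j : ℕ) (K : SimpleGraph (Fin n)) : Finset (Fin j ↪ Fin n) :=
  Finset.univ.filter fun g => cyc j g ≤ K

lemma mem_copies {n j : ℕ} {K : SimpleGraph (Fin n)} {g : Fin j ↪ Fin n} :
    g ∈ copies j K ↔ cyc j g ≤ K := by simp [copies]

lemma one_add_one_ne (m : ℕ) : (1 : Fin (m + 3)) + 1 ≠ 0 := by
  intro h
  have := congrArg Fin.val h
  simp [Fin.val_add] at this
  rw [Nat.mod_eq_of_lt (by omega)] at this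
  omega

lemma cycleGraph_adj_succ (m : ℕ) (a : Fin (m + 3)) : (cycleGraph (m + 3)).Adj a (a + 1) := by
  rw [cycleGraph_adj]; right; abel

lemma cyc_le_iff {n m : ℕ} {g : Fin (m + 3) ↪ Fin n} {K : SimpleGraph (Fin n)} :
    cyc (m + 3) g ≤ K ↔ ∀ a, K.Adj (g a) (g (a + 1)) := by
  rw [cyc, SimpleGraph.map_le_iff_le_comap]
  constructor
  · intro h a
    exact h (cycleGraph_adj_succ m a)
  · intro h a b hab
    rw [cycleGraph_adj] at hab
    rw [comap_adj]
    rcases hab with hab | hab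
    · rw [sub_eq_iff_eq_add'] at hab
      rw [hab]; exact (h b).symm
    · rw [sub_eq_iff_eq_add'] at hab
      rw [hab]; exact h a

lemma cyc_adj {n m : ℕ} {f : Fin (m + 3) ↪ Fin n} {u v : Fin n} :
    (cyc (m + 3) f).Adj u v ↔ ∃ a b, (b - a = 1 ∨ a - b = 1) ∧ f a = u ∧ f b = v := by
  rw [cyc, map_adj]
  simp only [cycleGraph_adj]
  constructor <;> rintro ⟨a, b, h, h'⟩ <;> exact ⟨a, b, h.symm, h'⟩

lemma nsmul_one_eq_zero_iff (j k : ℕ) : k • (1 : Fin (j + 3)) = 0 ↔ (j + 3) ∣ k := by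
  open Fin.CommRing in
  rw [nsmul_one, Fin.natCast_eq_zero]

/-- Every element of the cyclic group `Fin (j + 3)` is a multiple of `1`, which gives access to
induction along the cycle. -/
lemma val_nsmul_one {j : ℕ} (a : Fin (j + 3)) : a.val • (1 : Fin (j + 3)) = a := by
  open Fin.CommRing in
  rw [nsmul_one]; simp

/-- An injective map between cycles that sends neighbours to neighbours moves with constant step
`h 1 - h 0 = ±1`: a change of direction would give `h (a + 2) = h a`. -/
lemma cycle_hom_rigid {i j : ℕ} (h : Fin (i + 3) ↪ Fin (j + 3))
    (hh : ∀ a, h (a + 1) - h a = 1 ∨ h a - h (a + 1) = 1) (k : ℕ) :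
    h (k • 1) = h 0 + k • (h 1 - h 0) := by
  have step : ∀ a, h (a + 1 + 1) - h (a + 1) = h (a + 1) - h a := by
    intro a
    have hne : h (a + 1 + 1) ≠ h a := by
      intro he
      have := h.injective he
      rw [add_assoc, add_eq_left] at this
      exact one_add_one_ne i this
    rcases hh a with h1 | h1 <;> rcases hh (a + 1) with h2 | h2
    · rw [h1, h2]
    · exact absurd (by rw [← h2] at h1; exact (sub_right_injective h1).symm) hne
    · exact absurd (by rw [← h2] at h1; exact (sub_left_injective h1).symm) hne
    · rw [← neg_sub, h2, ← neg_sub (h a), h1]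
  have diff : ∀ k : ℕ, h (k • 1 + 1) - h (k • 1) = h 1 - h 0 := by
    intro k
    induction k with
    | zero => simp
    | succ k ih => rw [succ_nsmul, step, ih]
  induction k with
  | zero => simp
  | succ k ih =>
    rw [succ_nsmul, succ_nsmul, ← diff k, ← add_assoc, diff k, ← ih, ← diff k]
    abel

/-- Going once around the source closes up in the target, so `j + 3 ∣ i + 3`; injectivity gives
`i + 3 ≤ j + 3`. -/
lemma cycle_hom_eq_len {i j : ℕ} (h : Fin (i + 3) ↪ Fin (j + 3))
    (hh : ∀ a, h (a + 1) - h a = 1 ∨ h a - h (a + 1) = 1) : i = j := by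
  have h1 := cycle_hom_rigid h hh (i + 3)
  rw [(nsmul_one_eq_zero_iff i (i + 3)).2 dvd_rfl, left_eq_add] at h1
  have h2 : (j + 3) ∣ (i + 3) := by
    rw [← nsmul_one_eq_zero_iff]
    have h3 := hh 0
    rw [zero_add] at h3
    rcases h3 with h3 | h3
    · rwa [h3] at h1
    · rw [← neg_sub, h3, smul_neg, neg_eq_zero] at h1
      exact h1
  have h4 := Fintype.card_le_of_embedding h
  simp only [Fintype.card_fin] at h4
  have := Nat.le_of_dvd (by omega) h2
  omega

/-- If one embedded cycle lies in another, the first labelling factors through the second. -/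
lemma exists_hom_of_cyc_le {n i j : ℕ} {g : Fin (i + 3) ↪ Fin n} {f : Fin (j + 3) ↪ Fin n}
    (hgf : cyc (i + 3) g ≤ cyc (j + 3) f) :
    ∃ h : Fin (i + 3) ↪ Fin (j + 3), (∀ a, g a = f (h a)) ∧
      ∀ a, h (a + 1) - h a = 1 ∨ h a - h (a + 1) = 1 := by
  rw [cyc_le_iff] at hgf
  have hex : ∀ a, ∃ b, f b = g a := by
    intro a
    obtain ⟨x, y, -, hx, -⟩ := cyc_adj.1 (hgf a)
    exact ⟨x, hx⟩
  choose h hh using hex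
  refine ⟨⟨h, fun a b hab => g.injective ?_⟩, fun a => (hh a).symm, fun a => ?_⟩
  · rw [← hh a, ← hh b, hab]
  · obtain ⟨x, y, hxy, hx, hy⟩ := cyc_adj.1 (hgf a)
    have h1 : x = h a := f.injective (by rw [hx, hh])
    have h2 : y = h (a + 1) := f.injective (by rw [hy, hh])
    subst h1 h2
    exact hxy

lemma len_eq_of_cyc_le {n i j : ℕ} {g : Fin (i + 3) ↪ Fin n} {f : Fin (j + 3) ↪ Fin n}
    (hgf : cyc (i + 3) g ≤ cyc (j + 3) f) : i = j := by
  obtain ⟨h, -, hh⟩ := exists_hom_of_cyc_le hgf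
  exact cycle_hom_eq_len h hh

lemma cycleGraph_ncard_edgeSet (m : ℕ) : (cycleGraph (m + 3)).edgeSet.ncard = m + 3 := by
  classical
  rw [← coe_edgeFinset, Set.ncard_coe_finset]
  have := sum_degrees_eq_twice_card_edges (cycleGraph (m + 3))
  have h2 : ∀ v, (cycleGraph (m + 3)).degree v = 2 := by
    intro v
    rw [← cycleGraph_degree_three_le (n := m) (v := v)]
  simp only [h2, Finset.sum_const, Finset.card_univ, Fintype.card_fin, smul_eq_mul] at this
  omega

lemma cyc_ncard_edgeSet {n m : ℕ} (f : Fin (m + 3) ↪ Fin n) :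
    (cyc (m + 3) f).edgeSet.ncard = m + 3 := by
  rw [cyc, edgeSet_map, Set.ncard_image_of_injective _ (Function.Embedding.injective _),
    cycleGraph_ncard_edgeSet]

lemma cyc_eq_of_le {n i : ℕ} {g : Fin (i + 3) ↪ Fin n} {f : Fin (i + 3) ↪ Fin n}
    (hgf : cyc (i + 3) g ≤ cyc (i + 3) f) : cyc (i + 3) g = cyc (i + 3) f := by
  rw [← edgeSet_inj]
  exact Set.eq_of_subset_of_ncard_le (edgeSet_subset_edgeSet.2 hgf)
    (by rw [cyc_ncard_edgeSet, cyc_ncard_edgeSet]) (Set.toFinite _)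

/-- A cycle of length `m + 3` has exactly `2 * (m + 3)` labellings, the rotations `a ↦ x + a` and the
reflections `a ↦ x - a` of a given one. -/
lemma card_copies_cyc {n m : ℕ} (f : Fin (m + 3) ↪ Fin n) :
    #(copies (m + 3) (cyc (m + 3) f)) = 2 * (m + 3) := by
  classical
  let Ψ : Fin (m + 3) × Bool → (Fin (m + 3) ↪ Fin n) := fun xs =>
    (if xs.2 then (Equiv.addLeft xs.1).toEmbedding else (Equiv.subLeft xs.1).toEmbedding).trans f
  have hΨ : Function.Injective Ψ := by
    rintro ⟨x, s⟩ ⟨y, t⟩ h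
    have h0 := DFunLike.congr_fun h 0
    have h1 := DFunLike.congr_fun h 1
    have hxy : x = y := by
      cases s <;> cases t <;> simpa [Ψ] using h0
    subst hxy
    have key : ¬ (x + 1 = x - 1) := by
      intro h
      rw [eq_sub_iff_add_eq, add_assoc, add_eq_left] at h
      exact one_add_one_ne m h
    cases s <;> cases t
    · rfl
    · simp only [Ψ] at h1
      exact absurd (f.injective h1).symm key
    · simp only [Ψ] at h1
      exact absurd (f.injective h1) key
    · rfl
  have himg : copies (m + 3) (cyc (m + 3) f) = Finset.univ.image Ψ := by
    ext g
    rw [mem_copies, Finset.mem_image]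
    constructor
    · intro hg
      obtain ⟨h, hgh, hh⟩ := exists_hom_of_cyc_le hg
      have hr : ∀ a, h a = h 0 + a.val • (h 1 - h 0) := by
        intro a
        have := cycle_hom_rigid h hh a.val
        rwa [val_nsmul_one] at this
      have h3 := hh 0
      rw [zero_add] at h3
      rcases h3 with h3 | h3
      · refine ⟨(h 0, true), Finset.mem_univ _, ?_⟩
        ext1 a
        rw [hgh, hr a, h3, val_nsmul_one]
        simp [Ψ]
      · refine ⟨(h 0, false), Finset.mem_univ _, ?_⟩
        ext1 a
        rw [hgh, hr a, ← neg_sub, h3, smul_neg, val_nsmul_one, ← sub_eq_add_neg]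
        simp [Ψ]
    · rintro ⟨⟨x, s⟩, -, rfl⟩
      rw [cyc_le_iff]
      intro a
      rw [cyc_adj]
      cases s
      · exact ⟨x - a, x - (a + 1), Or.inr (by abel), rfl, rfl⟩
      · exact ⟨x + a, x + (a + 1), Or.inl (by abel), rfl, rfl⟩
  rw [himg, Finset.card_image_of_injective _ hΨ]
  simp [mul_comm]

/-- The labelled count is `2 * (m + 3)` times the number of cycles. A cycle subgraph has no isolated
vertices, so it is determined by its edges, and it equals `cyc (m + 3) f` for precisely the
`2 * (m + 3)` labellings `f` of `card_copies_cyc`. -/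
lemma card_copies {n m : ℕ} (G : SimpleGraph (Fin n)) :
    #(copies (m + 3) G) = 2 * (m + 3) * cycleCount (m + 3) G := by
  classical
  have hadj : ∀ H ∈ {H : G.Subgraph | Nonempty (H.coe ≃g cycleGraph (m + 3))},
      ∃ f : Fin (m + 3) ↪ Fin n, H.spanningCoe = cyc (m + 3) f ∧ H.verts = Set.range f := by
    rintro H ⟨e⟩
    refine ⟨e.symm.toEquiv.toEmbedding.trans (Function.Embedding.subtype _), ?_, ?_⟩
    · ext u v
      rw [cyc, map_adj, Subgraph.spanningCoe_adj]
      constructor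
      · intro huv
        refine ⟨e ⟨u, H.edge_vert huv⟩, e ⟨v, H.edge_vert huv.symm⟩, ?_, ?_, ?_⟩
        · rw [e.map_adj_iff]; exact huv
        · simp
        · simp
      · rintro ⟨a, b, hab, rfl, rfl⟩
        rw [← e.symm.map_adj_iff] at hab
        exact hab
    · ext v
      simp only [Set.mem_range]
      constructor
      · intro hv
        exact ⟨e ⟨v, hv⟩, by simp⟩
      · rintro ⟨a, rfl⟩
        exact (e.symm a).2
  have hsupp : ∀ f : Fin (m + 3) ↪ Fin n, (cyc (m + 3) f).support = Set.range f := by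
    intro f
    ext v
    rw [mem_support]
    constructor
    · rintro ⟨w, hw⟩
      obtain ⟨a, b, -, h, -⟩ := cyc_adj.1 hw
      exact ⟨a, h⟩
    · rintro ⟨a, rfl⟩
      exact ⟨f (a + 1), cyc_le_iff.1 le_rfl a⟩
  have himg : Subgraph.spanningCoe '' {H : G.Subgraph | Nonempty (H.coe ≃g cycleGraph (m + 3))} =
      ((copies (m + 3) G).image (cyc (m + 3)) : Finset (SimpleGraph (Fin n))) := by
    ext K
    simp only [Set.mem_image, Finset.coe_image, Finset.mem_coe, mem_copies]
    constructor
    · rintro ⟨H, hH, rfl⟩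
      obtain ⟨f, hf, -⟩ := hadj H hH
      exact ⟨f, hf ▸ H.spanningCoe_le, hf.symm⟩
    · rintro ⟨g, hg, rfl⟩
      let H : G.Subgraph :=
        { verts := Set.range g
          Adj := (cyc (m + 3) g).Adj
          adj_sub := fun h => hg h
          edge_vert := fun {v w} h => by
            obtain ⟨a, b, -, h, -⟩ := cyc_adj.1 h
            exact ⟨a, h⟩
          symm := (cyc (m + 3) g).symm }
      refine ⟨H, ⟨RelIso.symm ⟨Equiv.ofInjective g g.injective, ?_⟩⟩, ?_⟩
      · intro a b
        exact map_adj_apply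
      · ext; rfl
  have hinj : Set.InjOn Subgraph.spanningCoe
      {H : G.Subgraph | Nonempty (H.coe ≃g cycleGraph (m + 3))} := by
    intro H hH H' hH' h
    obtain ⟨f, hf, hv⟩ := hadj H hH
    obtain ⟨f', hf', hv'⟩ := hadj H' hH'
    ext u v
    · rw [hv, hv', ← hsupp, ← hsupp, ← hf, ← hf', h]
    · rw [← Subgraph.spanningCoe_adj, h, Subgraph.spanningCoe_adj]
  have hcount : cycleCount (m + 3) G = #((copies (m + 3) G).image (cyc (m + 3))) := by
    rw [cycleCount, ← hinj.ncard_image, himg, Set.ncard_coe_finset]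
  rw [hcount, mul_comm, ← smul_eq_mul, ← Finset.sum_const,
    Finset.card_eq_sum_card_image (cyc (m + 3))]
  refine Finset.sum_congr rfl fun K hK => ?_
  obtain ⟨f, hf, rfl⟩ := Finset.mem_image.1 hK
  rw [← card_copies_cyc f]
  congr 1
  ext g
  rw [Finset.mem_filter, mem_copies, mem_copies]
  rw [mem_copies] at hf
  constructor
  · rintro ⟨-, h⟩
    exact h.le
  · intro h
    exact ⟨h.trans hf, cyc_eq_of_le h⟩

/-! ### Counting the cycles that overlap a given cycle -/

lemma exists_adj_of_not_disjoint {n i : ℕ} {g : Fin (i + 3) ↪ Fin n} {K : SimpleGraph (Fin n)}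
    (h : ¬ Disjoint (cyc (i + 3) g) K) : ∃ a, K.Adj (g a) (g (a + 1)) := by
  by_contra! hcon
  refine h ?_
  rw [← le_compl_iff_disjoint_right, cyc_le_iff]
  intro a
  rw [compl_adj]
  exact ⟨fun he => (cycleGraph_adj_succ i a).ne (g.injective he), hcon a⟩

lemma cycle_edge_injective {n i : ℕ} (g : Fin (i + 3) ↪ Fin n) :
    Function.Injective fun a => s(g a, g (a + 1)) := by
  intro a b h
  simp only [Sym2.eq_iff, EmbeddingLike.apply_eq_iff_eq] at h
  rcases h with ⟨h, -⟩ | ⟨h1, h2⟩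
  · exact h
  · rw [h1, add_assoc, add_eq_left] at h2
    exact absurd h2 (one_add_one_ne i)

open scoped Classical in
/-- If the cycle `g` meets the cycle `f` in an edge without being contained in it, then the number of
edges of `g` outside `f` exceeds the number of vertices of `g` outside `f`. Indeed each vertex outside
`f` starts an edge outside `f`, and equality would let one walk along `g` from a common edge without
ever leaving `f`. -/
lemma card_outside_lt {n i j : ℕ} {g : Fin (i + 3) ↪ Fin n} {f : Fin (j + 3) ↪ Fin n}
    (h1 : ¬ cyc (i + 3) g ≤ cyc (j + 3) f) (h2 : ¬ Disjoint (cyc (i + 3) g) (cyc (j + 3) f)) :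
    #{a | g a ∉ Set.range f} + 1 ≤ (cyc (i + 3) g \ cyc (j + 3) f).edgeSet.ncard := by
  -- `D` indexes the edges of `g` outside `f` by their starting vertex
  set D : Finset (Fin (i + 3)) := {a | ¬ (cyc (j + 3) f).Adj (g a) (g (a + 1))} with hD
  have hDcard : #D ≤ (cyc (i + 3) g \ cyc (j + 3) f).edgeSet.ncard := by
    rw [← Finset.card_image_of_injective D (cycle_edge_injective g), ← Set.ncard_coe_finset]
    refine Set.ncard_le_ncard ?_ (Set.toFinite _)
    intro e he
    obtain ⟨a, ha, rfl⟩ := Finset.mem_image.1 (Finset.mem_coe.1 he)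
    rw [hD, Finset.mem_filter] at ha
    rw [mem_edgeSet, sdiff_adj]
    exact ⟨cyc_le_iff.1 le_rfl a, ha.2⟩
  have hl : ∀ a, (cyc (j + 3) f).Adj (g a) (g (a + 1)) →
      g a ∈ Set.range f ∧ g (a + 1) ∈ Set.range f := by
    intro a ha
    obtain ⟨x, y, -, hx, hy⟩ := cyc_adj.1 ha
    exact ⟨⟨x, hx⟩, ⟨y, hy⟩⟩
  refine (Nat.succ_le_of_lt (Finset.card_lt_card ?_)).trans hDcard
  rw [Finset.ssubset_iff_subset_ne]
  constructor
  · intro a ha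
    rw [Finset.mem_filter] at ha
    rw [hD, Finset.mem_filter]
    exact ⟨Finset.mem_univ _, fun h => ha.2 (hl a h).1⟩
  · intro heq
    have hiff : ∀ a, g a ∈ Set.range f → (cyc (j + 3) f).Adj (g a) (g (a + 1)) := by
      intro a ha
      by_contra hcon
      have : a ∈ D := by rw [hD, Finset.mem_filter]; exact ⟨Finset.mem_univ _, hcon⟩
      rw [← heq, Finset.mem_filter] at this
      exact this.2 ha
    obtain ⟨a₀, ha₀⟩ := exists_adj_of_not_disjoint h2
    have hall : ∀ k : ℕ, g (a₀ + k • 1) ∈ Set.range f := by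
      intro k
      induction k with
      | zero => simpa using (hl a₀ ha₀).1
      | succ k ih =>
        rw [succ_nsmul, ← add_assoc]
        exact (hl _ (hiff _ ih)).2
    refine h1 (cyc_le_iff.2 fun a => hiff a ?_)
    have := hall (a - a₀).val
    rwa [val_nsmul_one, add_sub_cancel] at this

open scoped Classical in
/-- Labelled `i`-cycles, on any vertices, that share an edge with `K` but are not contained in `K`. -/
noncomputable def badCopies {n : ℕ} (i : ℕ) (K : SimpleGraph (Fin n)) : Finset (Fin i ↪ Fin n) :=
  Finset.univ.filter fun g => ¬ cyc i g ≤ K ∧ ¬ Disjoint (cyc i g) K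

/-- The expected number of labelled cycles of length `i + 3` that share an edge with the cycle `f`, are
not contained in it, and appear once `f` is added is `O(p)`. Give vertices of `f` weight `1` and all others weight `p`; by `card_outside_lt`
each bad labelling contributes at most `p` times the product of the weights of its vertices, and
these products sum to at most the `(i + 3)`-rd power of the total weight, which is at most
`j + 3 + n * p`. -/
lemma sum_badCopies_le {n i j : ℕ} (f : Fin (j + 3) ↪ Fin n) {p c : ℝ} (h0 : 0 ≤ p) (h1 : p ≤ 1)
    (hnp : n * p ≤ c) :
    ∑ g ∈ badCopies (i + 3) (cyc (j + 3) f),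
      p ^ (cyc (i + 3) g \ cyc (j + 3) f).edgeSet.ncard ≤ p * (((j + 3 : ℕ) : ℝ) + c) ^ (i + 3) := by
  classical
  set w : Fin n → ℝ := fun v => if v ∈ Set.range f then 1 else p with hw
  have hw0 : ∀ v, 0 ≤ w v := by
    intro v; simp only [hw]; split_ifs <;> linarith
  have hsum : ∑ v, w v ≤ ((j + 3 : ℕ) : ℝ) + c := by
    have : ∀ v, w v ≤ (if v ∈ Set.range f then 1 else 0) + p := by
      intro v; simp only [hw]; split_ifs <;> linarith
    refine (Finset.sum_le_sum fun v _ => this v).trans ?_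
    rw [Finset.sum_add_distrib, Finset.sum_boole]
    have hc : #{v | v ∈ Set.range f} = j + 3 := by
      have : ({v | v ∈ Set.range f} : Finset (Fin n)) = Finset.univ.map f := by
        ext v; simp
      rw [this, Finset.card_map, Finset.card_univ, Fintype.card_fin]
    rw [hc]
    simp only [Finset.sum_const, Finset.card_univ, Fintype.card_fin, nsmul_eq_mul]
    linarith
  calc ∑ g ∈ badCopies (i + 3) (cyc (j + 3) f),
        p ^ (cyc (i + 3) g \ cyc (j + 3) f).edgeSet.ncard
      ≤ ∑ g ∈ badCopies (i + 3) (cyc (j + 3) f), p * ∏ a, w (g a) := by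
        refine Finset.sum_le_sum fun g hg => ?_
        rw [badCopies, Finset.mem_filter] at hg
        have := card_outside_lt hg.2.1 hg.2.2
        refine (pow_le_pow_of_le_one h0 h1 this).trans_eq ?_
        rw [pow_succ, mul_comm, hw, Finset.prod_ite]
        simp
    _ ≤ ∑ g : Fin (i + 3) ↪ Fin n, p * ∏ a, w (g a) :=
        Finset.sum_le_sum_of_subset_of_nonneg (Finset.subset_univ _) fun g _ _ =>
          mul_nonneg h0 (Finset.prod_nonneg fun a _ => hw0 _)
    _ = p * ∑ g : Fin (i + 3) ↪ Fin n, ∏ a, w (g a) := by rw [Finset.mul_sum]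
    _ ≤ p * ∑ g : Fin (i + 3) → Fin n, ∏ a, w (g a) := by
        refine mul_le_mul_of_nonneg_left ?_ h0
        rw [← Finset.sum_image (s := Finset.univ) (g := fun g : Fin (i + 3) ↪ Fin n => (g : _ → _))
          (f := fun g : Fin (i + 3) → Fin n => ∏ a, w (g a))
          (DFunLike.coe_injective.injOn)]
        exact Finset.sum_le_sum_of_subset_of_nonneg (Finset.subset_univ _) fun g _ _ =>
          (Finset.prod_nonneg fun a _ => hw0 _)
    _ = p * (∑ v, w v) ^ (i + 3) := by
        rw [← Fin.prod_const, Finset.prod_univ_sum, Fintype.piFinset_univ]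
    _ ≤ _ := by
        refine mul_le_mul_of_nonneg_left ?_ h0
        exact pow_le_pow_left₀ (Finset.sum_nonneg fun v _ => hw0 v) hsum _

/-- If `G` does not contain the cycle `f` and no bad cycle appears in `G ⊔ f`, then adding `f` to `G`
creates exactly one cycle, namely `f`. -/
lemma cycleCount_sup {n i j : ℕ} {f : Fin (j + 3) ↪ Fin n} {G : SimpleGraph (Fin n)}
    (hf : ¬ cyc (j + 3) f ≤ G)
    (hg : ∀ g ∈ badCopies (i + 3) (cyc (j + 3) f), ¬ cyc (i + 3) g \ cyc (j + 3) f ≤ G) :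
    cycleCount (i + 3) (G ⊔ cyc (j + 3) f) =
      cycleCount (i + 3) G + if i = j then 1 else 0 := by
  classical
  have hun : copies (i + 3) (G ⊔ cyc (j + 3) f) =
      copies (i + 3) G ∪ copies (i + 3) (cyc (j + 3) f) := by
    ext g
    rw [Finset.mem_union, mem_copies, mem_copies, mem_copies]
    constructor
    · intro h
      by_contra! hcon
      refine hg g ?_ ?_
      · rw [badCopies, Finset.mem_filter]
        refine ⟨Finset.mem_univ _, hcon.2, fun hd => hcon.1 (Disjoint.left_le_of_le_sup_right h hd)⟩
      · rw [sdiff_le_iff, sup_comm]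
        exact h
    · rintro (h | h)
      · exact h.trans le_sup_left
      · exact h.trans le_sup_right
  have hdisj : Disjoint (copies (i + 3) G) (copies (i + 3) (cyc (j + 3) f)) := by
    rw [Finset.disjoint_left]
    intro g h1 h2
    rw [mem_copies] at h1 h2
    obtain rfl := len_eq_of_cyc_le h2
    rw [cyc_eq_of_le h2] at h1
    exact hf h1
  have hcard := Finset.card_union_of_disjoint hdisj
  rw [← hun, card_copies, card_copies] at hcard
  split_ifs with hij
  · subst hij
    rw [card_copies_cyc] at hcard
    have : 2 * (i + 3) * cycleCount (i + 3) (G ⊔ cyc (i + 3) f) =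
      2 * (i + 3) * (cycleCount (i + 3) G + 1) := by rw [hcard]; ring
    exact Nat.eq_of_mul_eq_mul_left (by positivity) this
  · have : copies (i + 3) (cyc (j + 3) f) = ∅ := by
      rw [Finset.eq_empty_iff_forall_notMem]
      intro g h
      exact hij (len_eq_of_cyc_le (mem_copies.1 h))
    rw [this, Finset.card_empty] at hcard
    exact Nat.eq_of_mul_eq_mul_left (by positivity) hcard

lemma gEx_le_prob {n : ℕ} {p : ℝ} (H : SimpleGraph (Fin n)) [DecidablePred (H ≤ ·)] :
    gEx n p (fun G => if H ≤ G then 1 else 0) = p ^ H.edgeSet.ncard := by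
  have := gEx_subgraph (p := p) H (fun _ => 1)
  rw [gEx_one, mul_one] at this
  rw [← this]
  congr! 2
  split_ifs <;> rfl

open scoped Classical in
/-- The indicator of the event that, for each `i ∈ A`, there are exactly `b i` cycles of length
`i + 3`. Lengths are shifted by `3` so that `A` can be an arbitrary finite set. -/
noncomputable def ev {n : ℕ} (A : Finset ℕ) (b : ℕ → ℕ) (G : SimpleGraph (Fin n)) : ℝ :=
  if ∀ i ∈ A, cycleCount (i + 3) G = b i then 1 else 0

lemma ev_nonneg {n : ℕ} (A : Finset ℕ) (b : ℕ → ℕ) (G : SimpleGraph (Fin n)) : 0 ≤ ev A b G := by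
  unfold ev; split_ifs <;> simp

lemma ev_le_one {n : ℕ} (A : Finset ℕ) (b : ℕ → ℕ) (G : SimpleGraph (Fin n)) : ev A b G ≤ 1 := by
  unfold ev; split_ifs <;> simp

lemma gEx_ev_nonneg {n : ℕ} {p : ℝ} (h0 : 0 ≤ p) (h1 : p ≤ 1) (A : Finset ℕ) (b : ℕ → ℕ) :
    0 ≤ gEx n p (ev A b) :=
  Finset.sum_nonneg fun G _ => mul_nonneg (gWeight_nonneg h0 h1 G) (ev_nonneg A b G)

lemma gEx_ev_le_one {n : ℕ} {p : ℝ} (h0 : 0 ≤ p) (h1 : p ≤ 1) (A : Finset ℕ) (b : ℕ → ℕ) :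
    gEx n p (ev A b) ≤ 1 := by
  rw [← gEx_one n p]
  exact gEx_mono h0 h1 (ev_le_one A b)

open scoped Classical in
/-- Pointwise coupling bound: the vector of cycle counts of `G ⊔ f` differs from that of `G` plus one
cycle of length `j + 3` only if `f` was already present or a bad cycle appears. -/
lemma abs_ev_sup_sub_le {n j : ℕ} (f : Fin (j + 3) ↪ Fin n) (A : Finset ℕ) (b : ℕ → ℕ) (m : ℕ)
    (G : SimpleGraph (Fin n)) :
    |ev A (Function.update b j (m + 1)) (G ⊔ cyc (j + 3) f) - ev A (Function.update b j m) G| ≤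
      (if cyc (j + 3) f ≤ G then 1 else 0) + ∑ i ∈ A, ∑ g ∈ badCopies (i + 3) (cyc (j + 3) f),
        if cyc (i + 3) g \ cyc (j + 3) f ≤ G then (1 : ℝ) else 0 := by
  have hS0 : ∀ i ∈ A, (0 : ℝ) ≤ ∑ g ∈ badCopies (i + 3) (cyc (j + 3) f),
        if cyc (i + 3) g \ cyc (j + 3) f ≤ G then (1 : ℝ) else 0 :=
    fun i _ => Finset.sum_nonneg fun g _ => by split_ifs <;> simp
  have hle : |ev A (Function.update b j (m + 1)) (G ⊔ cyc (j + 3) f) -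
      ev A (Function.update b j m) G| ≤ 1 := by
    have h1 := ev_le_one A (Function.update b j (m + 1)) (G ⊔ cyc (j + 3) f)
    have h2 := ev_nonneg A (Function.update b j (m + 1)) (G ⊔ cyc (j + 3) f)
    have h3 := ev_le_one A (Function.update b j m) G
    have h4 := ev_nonneg A (Function.update b j m) G
    rw [abs_le]
    constructor <;> linarith
  by_cases hf : cyc (j + 3) f ≤ G
  · rw [if_pos hf]
    linarith [Finset.sum_nonneg hS0]
  rw [if_neg hf, zero_add]
  by_cases hb : ∃ i ∈ A, ∃ g ∈ badCopies (i + 3) (cyc (j + 3) f),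
      cyc (i + 3) g \ cyc (j + 3) f ≤ G
  · obtain ⟨i, hi, g, hg, hgG⟩ := hb
    refine hle.trans (le_trans ?_ (Finset.single_le_sum hS0 hi))
    refine le_trans ?_ (Finset.single_le_sum (fun g _ => ?_) hg)
    · rw [if_pos hgG]
    · split_ifs <;> simp
  · push Not at hb
    have : ev A (Function.update b j (m + 1)) (G ⊔ cyc (j + 3) f) =
        ev A (Function.update b j m) G := by
      unfold ev
      congr 1
      rw [eq_iff_iff]
      refine forall₂_congr fun i hi => ?_
      rw [cycleCount_sup hf (hb i hi)]
      by_cases hij : i = j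
      · subst hij
        simp
      · simp [hij]
    rw [this, sub_self, abs_zero]
    exact Finset.sum_nonneg hS0

lemma abs_gEx_ev_sup_sub_le {n j : ℕ} (f : Fin (j + 3) ↪ Fin n) (A : Finset ℕ) (b : ℕ → ℕ) (m : ℕ)
    {p c : ℝ} (h0 : 0 ≤ p) (h1 : p ≤ 1) (hnp : n * p ≤ c) :
    |gEx n p (fun G => ev A (Function.update b j (m + 1)) (G ⊔ cyc (j + 3) f)) -
      gEx n p (ev A (Function.update b j m))| ≤
      p * (1 + ∑ i ∈ A, (((j + 3 : ℕ) : ℝ) + c) ^ (i + 3)) := by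
  classical
  rw [← gEx_sub]
  refine (abs_gEx_le h0 h1 _).trans
    ((gEx_mono h0 h1 fun G => abs_ev_sup_sub_le f A b m G).trans ?_)
  rw [gEx_add, gEx_le_prob, gEx_sum, mul_add, mul_one, Finset.mul_sum]
  refine add_le_add ?_ (Finset.sum_le_sum fun i _ => ?_)
  · rw [cyc_ncard_edgeSet]
    exact pow_le_of_le_one h0 h1 (by omega)
  · rw [gEx_sum]
    simp only [gEx_le_prob]
    exact sum_badCopies_le f h0 h1 hnp

/-- Expanding the number of cycles of length `j + 3` as a sum over labelled cycles, each of which is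
then forced into the random graph. -/
lemma gEx_copies_mul {n j : ℕ} {p : ℝ} (φ : SimpleGraph (Fin n) → ℝ) :
    gEx n p (fun G => (2 * ((j + 3 : ℕ) : ℝ) * cycleCount (j + 3) G) * φ G) =
      p ^ (j + 3) * ∑ f : Fin (j + 3) ↪ Fin n, gEx n p (fun G => φ (G ⊔ cyc (j + 3) f)) := by
  classical
  have : ∀ G : SimpleGraph (Fin n), (2 * ((j + 3 : ℕ) : ℝ) * cycleCount (j + 3) G) * φ G =
      ∑ f : Fin (j + 3) ↪ Fin n, if cyc (j + 3) f ≤ G then φ G else 0 := by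
    intro G
    have h := card_copies (m := j) G
    have h' : (2 * ((j + 3 : ℕ) : ℝ) * cycleCount (j + 3) G) = #(copies (j + 3) G) := by
      rw [h]; push_cast; ring
    rw [h', ← Finset.sum_filter, Finset.sum_const, nsmul_eq_mul, copies]
  simp only [this]
  rw [gEx_sum, Finset.mul_sum]
  refine Finset.sum_congr rfl fun f _ => ?_
  rw [gEx_subgraph, cyc_ncard_edgeSet]

/-- The approximate recurrence `(m + 1) P(X_j = m + 1, …) ≈ λ_j P(X_j = m, …)`, with error of order
`p`; here `n.descFactorial (j + 3) * p ^ (j + 3)` is the expected number of labelled cycles of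
length `j + 3`. -/
lemma recurrence {n j : ℕ} {A : Finset ℕ} (hj : j ∈ A) (b : ℕ → ℕ) (m : ℕ)
    {p c : ℝ} (h0 : 0 ≤ p) (h1 : p ≤ 1) (hnp : n * p ≤ c) :
    |2 * ((j + 3 : ℕ) : ℝ) * ((m + 1) * gEx n p (ev A (Function.update b j (m + 1)))) -
      (n.descFactorial (j + 3) * p ^ (j + 3)) * gEx n p (ev A (Function.update b j m))| ≤
      (n.descFactorial (j + 3) * p ^ (j + 3)) *
        (p * (1 + ∑ i ∈ A, (((j + 3 : ℕ) : ℝ) + c) ^ (i + 3))) := by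
  have hL : 2 * ((j + 3 : ℕ) : ℝ) * ((m + 1) * gEx n p (ev A (Function.update b j (m + 1)))) =
      p ^ (j + 3) * ∑ f : Fin (j + 3) ↪ Fin n,
        gEx n p (fun G => ev A (Function.update b j (m + 1)) (G ⊔ cyc (j + 3) f)) := by
    rw [← gEx_copies_mul, ← mul_assoc, ← gEx_const_mul]
    congr 1
    ext G
    by_cases h : ∀ i ∈ A, cycleCount (i + 3) G = Function.update b j (m + 1) i
    · have := h j hj
      rw [this]
      simp
    · simp [ev, h]
  have hcard : (n.descFactorial (j + 3) : ℝ) = ∑ f : Fin (j + 3) ↪ Fin n, (1 : ℝ) := by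
    rw [Finset.sum_const, Finset.card_univ, Fintype.card_embedding_eq]
    simp
  rw [hL, hcard, mul_comm _ (p ^ (j + 3)), mul_assoc, mul_assoc, Finset.sum_mul, Finset.sum_mul,
    ← mul_sub, abs_mul, abs_of_nonneg (pow_nonneg h0 _), ← Finset.sum_sub_distrib]
  refine mul_le_mul_of_nonneg_left ?_ (pow_nonneg h0 _)
  refine (Finset.abs_sum_le_sum_abs _ _).trans (Finset.sum_le_sum fun f _ => ?_)
  rw [one_mul, one_mul]
  exact abs_gEx_ev_sup_sub_le f A b m h0 h1 hnp

lemma descFactorial_mul_pow_le {n j : ℕ} {p c : ℝ} (h0 : 0 ≤ p) (hnp : n * p ≤ c) :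
    n.descFactorial j * p ^ j ≤ c ^ j := by
  calc (n.descFactorial j : ℝ) * p ^ j ≤ (n : ℝ) ^ j * p ^ j := by
        gcongr; exact_mod_cast Nat.descFactorial_le_pow n j
    _ = (n * p) ^ j := by rw [mul_pow]
    _ ≤ c ^ j := by gcongr

/-- Markov's inequality: the mass lost by summing over the values `m < K` of the count of cycles of
length `j + 3` is at most `c ^ (j + 3) / K`. The inequality is multiplied by `K`, so that `K = 0`
needs no exception. -/
lemma tail_bound {n j : ℕ} {A : Finset ℕ} (hj : j ∉ A) (b : ℕ → ℕ) (K : ℕ)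
    {p c : ℝ} (h0 : 0 ≤ p) (h1 : p ≤ 1) (hnp : n * p ≤ c) :
    K * |∑ m ∈ Finset.range K, gEx n p (ev (insert j A) (Function.update b j m)) -
      gEx n p (ev A b)| ≤ c ^ (j + 3) := by
  classical
  have hE : gEx n p (fun G => (cycleCount (j + 3) G : ℝ)) ≤ c ^ (j + 3) := by
    have h := gEx_copies_mul (n := n) (j := j) (p := p) (fun _ => 1)
    simp only [gEx_one, Finset.sum_const, Finset.card_univ, Fintype.card_embedding_eq,
      Fintype.card_fin, nsmul_eq_mul, mul_one] at h
    have h2 := descFactorial_mul_pow_le (n := n) (j := j + 3) h0 hnp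
    rw [mul_comm, ← h] at h2
    refine le_trans (gEx_mono h0 h1 fun G => ?_) h2
    refine le_mul_of_one_le_left (Nat.cast_nonneg _) ?_
    push_cast
    linarith [(Nat.cast_nonneg j : (0 : ℝ) ≤ j)]
  have hev : ∀ m (G : SimpleGraph (Fin n)), ev (insert j A) (Function.update b j m) G =
      if m = cycleCount (j + 3) G then ev A b G else 0 := by
    intro m G
    unfold ev
    rw [← ite_and]
    congr 1
    rw [eq_iff_iff, Finset.forall_mem_insert, Function.update_self, eq_comm]
    refine and_congr_right fun _ => forall₂_congr fun i hi => ?_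
    rw [Function.update_of_ne (ne_of_mem_of_not_mem hi hj)]
  rw [← gEx_sum, ← gEx_sub, ← abs_of_nonneg (Nat.cast_nonneg (α := ℝ) K), ← abs_mul, ← gEx_const_mul]
  refine (abs_gEx_le h0 h1 _).trans (le_trans (gEx_mono h0 h1 fun G => ?_) hE)
  simp only [hev, Finset.sum_ite_eq', Finset.mem_range]
  rw [abs_mul, Nat.abs_cast]
  split_ifs with hlt
  · simp
  · rw [zero_sub, abs_neg, abs_of_nonneg (ev_nonneg A b G)]
    calc (K : ℝ) * ev A b G ≤ K * 1 := by gcongr; exact ev_le_one A b G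
      _ ≤ _ := by rw [mul_one]; exact_mod_cast not_lt.1 hlt

/-! ### From the recurrence to the Poisson limit -/

/-- Sequences `q n ·` that asymptotically satisfy the Poisson recurrence `(m + 1) q (m + 1) = l q m`
and whose partial sums approximate `r n → R` uniformly in `n` converge to `R` times the Poisson
probabilities of mean `l`. The recurrence expresses everything through `q n 0`, and the total mass
then forces `q n 0 → R * exp (-l)`. -/
lemma tendsto_poisson_of_recurrence {q : ℕ → ℕ → ℝ} {r : ℕ → ℝ} {l R C : ℝ} (hl : 0 ≤ l)
    (hrec : ∀ m : ℕ, Tendsto (fun n => (m + 1) * q n (m + 1) - l * q n m) atTop (𝓝 0))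
    (hr : Tendsto r atTop (𝓝 R))
    (htail : ∀ n K : ℕ, K * |∑ m ∈ Finset.range K, q n m - r n| ≤ C) (m : ℕ) :
    Tendsto (fun n => q n m) atTop (𝓝 (R * (Real.exp (-l) * l ^ m / m.factorial))) := by
  have h0 : ∀ m : ℕ, Tendsto (fun n => q n m - l ^ m / m.factorial * q n 0) atTop (𝓝 0) := by
    intro m
    induction m with
    | zero => simp
    | succ m ih =>
      have h := ((hrec m).add (ih.const_mul l)).const_mul ((m + 1 : ℝ)⁻¹)
      simp only [mul_zero, add_zero] at h
      refine h.congr fun n => ?_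
      have : (m + 1 : ℝ) ≠ 0 := by positivity
      rw [Nat.factorial_succ]
      push_cast
      field_simp
      ring
  set S : ℕ → ℝ := fun K => ∑ m ∈ Finset.range K, l ^ m / m.factorial with hS
  have hSlim : Tendsto S atTop (𝓝 (Real.exp l)) := by
    have := (NormedSpace.expSeries_div_hasSum_exp l).tendsto_sum_nat
    rwa [← Real.exp_eq_exp_ℝ] at this
  have hsum : ∀ K, Tendsto (fun n => ∑ m ∈ Finset.range K, q n m - S K * q n 0) atTop (𝓝 0) := by
    intro K
    have := tendsto_finsetSum (Finset.range K) (fun m _ => h0 m)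
    simp only [Finset.sum_const_zero] at this
    refine this.congr fun n => ?_
    rw [Finset.sum_sub_distrib, hS, Finset.sum_mul]
  have hS1 : ∀ K, 1 ≤ K → 1 ≤ S K := by
    intro K hK
    have := Finset.single_le_sum (f := fun m => l ^ m / (m.factorial : ℝ))
      (fun m _ => by positivity) (Finset.mem_range.2 hK)
    simpa using this
  have hq0 : Tendsto (fun n => q n 0) atTop (𝓝 (R * Real.exp (-l))) := by
    have hRS : Tendsto (fun K => R / S K) atTop (𝓝 (R * Real.exp (-l))) := by
      rw [Real.exp_neg]
      exact hSlim.inv₀ (Real.exp_pos l).ne' |>.const_mul R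
    have hCK : Tendsto (fun K : ℕ => C / (K : ℝ)) atTop (𝓝 0) :=
      tendsto_const_div_atTop_nhds_zero_nat C
    rw [Metric.tendsto_atTop]
    intro ε hε
    obtain ⟨K, hK1, hK2, hK3⟩ := ((eventually_ge_atTop 1).and
      ((hRS.eventually (Metric.ball_mem_nhds _ (by positivity : (0 : ℝ) < ε / 4))).and
      (hCK.eventually (gt_mem_nhds (by positivity : (0 : ℝ) < ε / 4))))).exists
    have e1 := (hsum K).eventually (Metric.ball_mem_nhds _ (by positivity : (0 : ℝ) < ε / 4))
    have e2 := hr.eventually (Metric.ball_mem_nhds _ (by positivity : (0 : ℝ) < ε / 4))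
    -- `K` is fixed before `n`, since `hsum` is not uniform in `K`
    obtain ⟨N, hN⟩ := eventually_atTop.1 (e1.and e2)
    refine ⟨N, fun n hn => ?_⟩
    obtain ⟨a1, a2⟩ := hN n hn
    have hKpos : (0 : ℝ) < K := by exact_mod_cast hK1
    have a3 : |∑ m ∈ Finset.range K, q n m - r n| ≤ C / K := by
      rw [le_div_iff₀' hKpos]; exact htail n K
    rw [Real.dist_eq] at a1 a2 hK2
    rw [sub_zero] at a1
    have hSK := hS1 K hK1
    have a4 : |S K * q n 0 - R| < 3 * ε / 4 := by
      rw [abs_lt] at *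
      rw [abs_le] at a3
      constructor <;> linarith [a1.1, a1.2, a2.1, a2.2, a3.1, a3.2]
    have a5 : |q n 0 - R / S K| < 3 * ε / 4 := by
      have hSpos : 0 < S K := by linarith
      have : q n 0 - R / S K = (S K * q n 0 - R) / S K := by field_simp
      rw [this, abs_div, abs_of_pos hSpos]
      exact (div_le_self (abs_nonneg _) hSK).trans_lt a4
    rw [Real.dist_eq]
    rw [abs_lt] at *
    constructor <;> linarith [a5.1, a5.2, hK2.1, hK2.2]
  have h := (h0 m).add (hq0.const_mul (l ^ m / m.factorial))
  rw [zero_add] at h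
  have e : R * (Real.exp (-l) * l ^ m / m.factorial) =
      l ^ m / m.factorial * (R * Real.exp (-l)) := by ring
  rw [e]
  refine h.congr fun n => ?_
  ring

lemma edgeProb_bounds {c : ℝ} (hc : 0 < c) (n : ℕ) :
    0 ≤ min 1 (c / n) ∧ min 1 (c / n) ≤ 1 ∧ n * min 1 (c / n) ≤ c := by
  refine ⟨by positivity, min_le_left _ _, ?_⟩
  rcases Nat.eq_zero_or_pos n with rfl | hn
  · simpa using hc.le
  · have hn' : (0 : ℝ) < n := by exact_mod_cast hn
    calc (n : ℝ) * min 1 (c / n) ≤ n * (c / n) := by gcongr; exact min_le_right _ _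
      _ = c := by field_simp

lemma edgeProb_tendsto {c : ℝ} (hc : 0 < c) :
    Tendsto (fun n : ℕ => min 1 (c / n)) atTop (𝓝 0) := by
  refine squeeze_zero (fun n => (edgeProb_bounds hc n).1) (fun n => min_le_right _ _) ?_
  exact tendsto_const_div_atTop_nhds_zero_nat c

lemma descFactorial_mul_pow_tendsto {c : ℝ} (hc : 0 < c) (j : ℕ) :
    Tendsto (fun n : ℕ => (n.descFactorial j : ℝ) * (min 1 (c / n)) ^ j) atTop (𝓝 (c ^ j)) := by
  have h1 : Tendsto (fun n : ℕ => (n.descFactorial j : ℝ) / (n : ℝ) ^ j) atTop (𝓝 1) := by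
    have h := isEquivalent_descFactorial j
    rw [Asymptotics.isEquivalent_iff_tendsto_one] at h
    · exact h
    · filter_upwards [eventually_ge_atTop 1] with n hn
      have : (n : ℝ) ≠ 0 := by positivity
      positivity
  have h2 := h1.mul_const (c ^ j)
  rw [one_mul] at h2
  refine h2.congr' ?_
  filter_upwards [eventually_ge_atTop 1, eventually_ge_atTop ⌈c⌉₊] with n hn hcn
  have hn' : (0 : ℝ) < n := by exact_mod_cast hn
  have hcn' : c ≤ n := Nat.ceil_le.1 hcn
  rw [min_eq_right ((div_le_one hn').2 hcn'), div_pow]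
  field_simp

/-- Joint convergence for an arbitrary finite set of cycle lengths, one length being added at a time:
the limit for `A` is the total mass `R` when the count of length `j + 3` varies. -/
theorem tendsto_gEx_ev (c : ℝ) (hc : 0 < c) (A : Finset ℕ) (b : ℕ → ℕ) :
    Tendsto (fun n : ℕ => gEx n (min 1 (c / n)) (ev A b)) atTop
      (𝓝 (∏ j ∈ A, Real.exp (-(c ^ (j + 3) / (2 * (j + 3 : ℕ)))) *
        (c ^ (j + 3) / (2 * (j + 3 : ℕ))) ^ b j / (b j).factorial)) := by
  induction A using Finset.induction_on generalizing b with
  | empty =>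
    have : ∀ n, (ev ∅ b : SimpleGraph (Fin n) → ℝ) = fun _ => 1 := by
      intro n; ext G; simp [ev]
    simp [this, gEx_one]
  | insert j A hj ih =>
    rw [Finset.prod_insert hj, mul_comm]
    set l : ℝ := c ^ (j + 3) / (2 * (j + 3 : ℕ)) with hl
    have key := tendsto_poisson_of_recurrence (l := l) (C := c ^ (j + 3))
      (q := fun n m => gEx n (min 1 (c / n)) (ev (insert j A) (Function.update b j m)))
      (r := fun n => gEx n (min 1 (c / n)) (ev A b)) (by positivity) ?_ (ih b) ?_ (b j)
    · simpa using key
    · intro m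
      set D : ℝ := 1 + ∑ i ∈ insert j A, (((j + 3 : ℕ) : ℝ) + c) ^ (i + 3)
      set N : ℕ → ℝ := fun n => (n.descFactorial (j + 3) : ℝ) * (min 1 (c / n)) ^ (j + 3)
      have hN : Tendsto N atTop (𝓝 (c ^ (j + 3))) := descFactorial_mul_pow_tendsto hc (j + 3)
      have hjpos : (0 : ℝ) < 2 * ((j + 3 : ℕ) : ℝ) := by positivity
      have t1 : Tendsto (fun n => N n * (min 1 (c / n) * D)) atTop (𝓝 0) := by
        have := hN.mul ((edgeProb_tendsto hc).mul_const D)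
        rwa [zero_mul, mul_zero] at this
      have t2 : Tendsto (fun n => |N n - c ^ (j + 3)|) atTop (𝓝 0) := by
        have := (hN.sub_const (c ^ (j + 3))).abs
        rwa [sub_self, abs_zero] at this
      have t3 := (t1.add t2).const_mul (2 * ((j + 3 : ℕ) : ℝ))⁻¹
      rw [add_zero, mul_zero] at t3
      refine squeeze_zero_norm (fun n => ?_) t3
      obtain ⟨p0, p1, p2⟩ := edgeProb_bounds hc n
      have hrec := recurrence (Finset.mem_insert_self j A) b m p0 p1 p2
      have q0 := gEx_ev_nonneg (n := n) p0 p1 (insert j A) (Function.update b j m)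
      have q1 := gEx_ev_le_one (n := n) p0 p1 (insert j A) (Function.update b j m)
      set Q := gEx n (min 1 (c / n)) (ev (insert j A) (Function.update b j m))
      set Q' := gEx n (min 1 (c / n)) (ev (insert j A) (Function.update b j (m + 1)))
      -- the error splits into that of `recurrence` and that of the mean `N n → c ^ (j + 3)`
      have hsplit : (m + 1) * Q' - l * Q = (2 * ((j + 3 : ℕ) : ℝ))⁻¹ *
          ((2 * ((j + 3 : ℕ) : ℝ) * ((m + 1) * Q') - N n * Q) + (N n - c ^ (j + 3)) * Q) := by
        rw [hl]
        field_simp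
        ring
      rw [Real.norm_eq_abs, hsplit, abs_mul, abs_of_pos (inv_pos.2 hjpos)]
      refine mul_le_mul_of_nonneg_left ((abs_add_le _ _).trans (add_le_add hrec ?_))
        (inv_pos.2 hjpos).le
      rw [abs_mul, abs_of_nonneg q0]
      exact mul_le_of_le_one_right (abs_nonneg _) q1
    · intro n K
      obtain ⟨p0, p1, p2⟩ := edgeProb_bounds hc n
      exact tail_bound hj b K p0 p1 p2

/-- For fixed `c > 0` and `k ≥ 3`, the numbers of cycles of lengths `3,…,k` in `G(n,c/n)`
converge jointly in distribution to independent Poisson variables with means `c^j/(2j)`. -/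
theorem tendsto_cycleCounts_poisson (c : ℝ) (hc : 0 < c) (k : ℕ) (hk : 3 ≤ k) (b : ℕ → ℕ) :
    Tendsto
      (fun n : ℕ => gProb n (min 1 (c / n))
        (fun G => ∀ j ∈ Finset.Icc 3 k, cycleCount j G = b j))
      atTop
      (𝓝 (∏ j ∈ Finset.Icc 3 k,
        Real.exp (-(c ^ j / (2 * j))) * (c ^ j / (2 * j)) ^ b j / (b j).factorial)) := by
  have hI : Finset.Icc 3 k = (Finset.range (k - 2)).map (addRightEmbedding 3) := by
    ext j
    simp only [Finset.mem_Icc, Finset.mem_map, Finset.mem_range, addRightEmbedding_apply]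
    constructor
    · intro h
      exact ⟨j - 3, by omega, by omega⟩
    · rintro ⟨a, ha, rfl⟩
      omega
  have h := tendsto_gEx_ev c hc (Finset.range (k - 2)) (fun i => b (i + 3))
  rw [hI, Finset.prod_map]
  refine h.congr fun n => ?_
  rw [gProb_eq_gEx]
  congr 1
  ext G
  unfold ev
  congr 1
  simp
end

section
/- Let 0 < c < 1 and p(n) = c/n. Then the expected total number of cycles (of all lengths ≥ 3) in G(n,p(n)) converges, as n → ∞, to f(c) = (1/2)·ln(1/(1−c)) − c/2 − c²/4, and the probability that G(n,p(n)) contains no cycle converges, as n → ∞, to e^{−f(c)} = e^{c/2+c²/4}·√(1−c). -/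
/-!
A graph on `n` vertices is treated as a random subset of the set of unordered pairs, in which loops
have probability `0` and all other pairs probability `p = c / n`. A cycle is identified with its edge
set. By `totalCycleCount_eq` the cycle count of `G` is then the number of members of a fixed finite
family `cyclesUpTo` contained in the edge set of `G`.

**Expectation.** A cycle of length `j` has exactly `2j` parametrisations (`cycEdges_eq_iff`), so the
complete graph on `n` vertices has `n (n-1) ⋯ (n-j+1) / (2j)` of them, each present with probability
`(c/n)^j`. The expected number of `j`-cycles tends to `c^j / (2j)` and is at most `c^j`; dominated
convergence (`tendsto_meanCycles`) gives the limit `∑_{j ≥ 3} c^j / (2j)`, which is `f(c)` by the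
logarithm series.

**Absence of cycles.** The limit `exp (-f(c))` is obtained from two correlation inequalities for random
subsets rather than from moment calculations.
* Lower bound: by Harris' inequality (`prod_le_subsetExp_avoid`), the probability of containing no
  cycle is at least `∏ (1 - p^|S|)` over all cycles `S`, which is at least `exp (-μ / (1 - p))`, where
  `μ` is the expected number of cycles.
* Upper bound: by Janson's inequality (`subsetExp_avoid_le`), the probability of containing no cycle
  of length less than `J + 3` is at most `exp (-μ_J + Δ_J)`. Here `μ_J` is the expected number of such
  cycles, and `Δ_J` sums the probabilities that both members of a pair of distinct cycles sharing an
  edge are present. The union of such a pair has more edges than vertices (`card_endpoints_lt`), so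
  `Δ_J = O(1/n)` for fixed `J` (`overlap_le`).

Letting `n → ∞` and then `J → ∞` closes the gap.
-/

open Filter Topology

/-- The total number of cycles (of any length `≥ 3`) in `G`. -/
noncomputable def totalCycleCount {n : ℕ} (G : SimpleGraph (Fin n)) : ℕ :=
  Set.ncard {H : G.Subgraph | ∃ j, 3 ≤ j ∧ Nonempty (H.coe ≃g SimpleGraph.cycleGraph j)}

/-! ### Correlation inequalities for random subsets -/

section RandomSubset

open Finset

variable {α : Type*} [DecidableEq α]

/-- Indicator of the event that no member of the family `𝒟` is contained in `X`. -/
noncomputable def avoidInd (𝒟 : Finset (Finset α)) (X : Finset α) : ℝ :=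
  if ∀ S ∈ 𝒟, ¬ S ⊆ X then 1 else 0

/-- Indicator of the event that `S` is contained in `X`. -/
noncomputable def subInd (S X : Finset α) : ℝ := if S ⊆ X then 1 else 0

lemma avoidInd_nonneg (𝒟 : Finset (Finset α)) (X : Finset α) : 0 ≤ avoidInd 𝒟 X := by
  unfold avoidInd; split_ifs <;> norm_num

lemma avoidInd_le_one (𝒟 : Finset (Finset α)) (X : Finset α) : avoidInd 𝒟 X ≤ 1 := by
  unfold avoidInd; split_ifs <;> norm_num

lemma avoidInd_antitone (𝒟 : Finset (Finset α)) : Antitone (avoidInd 𝒟) := by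
  intro X Y h
  unfold avoidInd
  split_ifs with h1 h2 <;> norm_num
  exact h2 fun S hS hX => h1 S hS (hX.trans h)

lemma avoidInd_anti {𝒟 𝒟' : Finset (Finset α)} (h : 𝒟 ⊆ 𝒟') (X : Finset α) :
    avoidInd 𝒟' X ≤ avoidInd 𝒟 X := by
  unfold avoidInd
  split_ifs with h1 h2 <;> norm_num
  exact h2 fun S hS => h1 S (h hS)

lemma avoidInd_union (𝒟 𝒟' : Finset (Finset α)) (X : Finset α) :
    avoidInd (𝒟 ∪ 𝒟') X = avoidInd 𝒟 X * avoidInd 𝒟' X := by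
  unfold avoidInd
  by_cases h1 : ∀ S ∈ 𝒟, ¬ S ⊆ X <;> by_cases h2 : ∀ S ∈ 𝒟', ¬ S ⊆ X
  · rw [if_pos h1, if_pos h2, if_pos (fun S hS => (mem_union.1 hS).elim (h1 S) (h2 S))]; simp
  · rw [if_neg h2, if_neg (fun h => h2 fun S hS => h S (mem_union_right _ hS))]; simp
  · rw [if_neg h1, if_neg (fun h => h1 fun S hS => h S (mem_union_left _ hS))]; simp
  · rw [if_neg h1, if_neg (fun h => h1 fun S hS => h S (mem_union_left _ hS))]; simp

lemma avoidInd_singleton (S X : Finset α) : avoidInd {S} X = 1 - subInd S X := by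
  unfold avoidInd subInd
  by_cases h : S ⊆ X <;> simp [h]

lemma avoidInd_insert (S : Finset α) (𝒟 : Finset (Finset α)) (X : Finset α) :
    avoidInd (insert S 𝒟) X = (1 - subInd S X) * avoidInd 𝒟 X := by
  rw [insert_eq, avoidInd_union, avoidInd_singleton]

lemma subInd_nonneg (S X : Finset α) : 0 ≤ subInd S X := by
  unfold subInd; split_ifs <;> norm_num

lemma subInd_monotone (S : Finset α) : Monotone (subInd S) := by
  intro X Y h
  unfold subInd
  split_ifs with h1 h2 <;> norm_num
  exact h2 (h1.trans h)

/-- The union bound. -/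
lemma one_sub_sum_le_avoidInd (𝒟 : Finset (Finset α)) (X : Finset α) :
    1 - ∑ T ∈ 𝒟, subInd T X ≤ avoidInd 𝒟 X := by
  induction 𝒟 using Finset.induction_on with
  | empty => simp [avoidInd]
  | insert S 𝒟 hS ih =>
    rw [sum_insert hS, avoidInd_insert]
    have h1 := avoidInd_nonneg 𝒟 X
    have h2 : subInd S X = 0 ∨ subInd S X = 1 := by unfold subInd; split_ifs <;> simp
    have h3 : 0 ≤ ∑ T ∈ 𝒟, subInd T X := sum_nonneg fun T _ => subInd_nonneg T X
    rcases h2 with h2 | h2 <;> rw [h2] <;> linarith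

variable [Fintype α] {q : α → ℝ}

/-- The weight of the outcome `X` for the random subset of `α` that contains each element `e`
independently with probability `q e`. -/
noncomputable def subsetWeight (q : α → ℝ) (X : Finset α) : ℝ :=
  ∏ e, if e ∈ X then q e else 1 - q e

/-- Expectation of `φ` under the random subset with marginals `q`. -/
noncomputable def subsetExp (q : α → ℝ) (φ : Finset α → ℝ) : ℝ :=
  ∑ X, subsetWeight q X * φ X

lemma subsetWeight_nonneg (h0 : ∀ e, 0 ≤ q e) (h1 : ∀ e, q e ≤ 1) (X : Finset α) :
    0 ≤ subsetWeight q X :=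
  prod_nonneg fun e _ => by split_ifs; exacts [h0 e, sub_nonneg.2 (h1 e)]

lemma subsetWeight_mul (X Y : Finset α) :
    subsetWeight q X * subsetWeight q Y = subsetWeight q (X ⊓ Y) * subsetWeight q (X ⊔ Y) := by
  unfold subsetWeight
  rw [← prod_mul_distrib, ← prod_mul_distrib]
  refine prod_congr rfl fun e _ => ?_
  by_cases hX : e ∈ X <;> by_cases hY : e ∈ Y <;> simp [hX, hY, mul_comm]

lemma subsetExp_mono (h0 : ∀ e, 0 ≤ q e) (h1 : ∀ e, q e ≤ 1) {φ ψ : Finset α → ℝ}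
    (h : ∀ X, φ X ≤ ψ X) : subsetExp q φ ≤ subsetExp q ψ :=
  sum_le_sum fun X _ => mul_le_mul_of_nonneg_left (h X) (subsetWeight_nonneg h0 h1 X)

lemma subsetExp_sub (φ ψ : Finset α → ℝ) :
    subsetExp q (fun X => φ X - ψ X) = subsetExp q φ - subsetExp q ψ := by
  simp [subsetExp, mul_sub]

lemma subsetExp_sum {ι : Type*} (s : Finset ι) (φ : ι → Finset α → ℝ) :
    subsetExp q (fun X => ∑ i ∈ s, φ i X) = ∑ i ∈ s, subsetExp q (φ i) := by
  simp only [subsetExp, mul_sum]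
  exact sum_comm

/-- Splitting off one element: summing the weight against `φ` amounts to revealing the element `e`
last. -/
lemma subsetExp_split (e : α) (φ : Finset α → ℝ) :
    subsetExp q φ = ∑ X ∈ (univ.erase e).powerset,
      (∏ x ∈ univ.erase e, if x ∈ X then q x else 1 - q x) *
        ((1 - q e) * φ X + q e * φ (insert e X)) := by
  unfold subsetExp
  have hu : (univ : Finset (Finset α)) = (insert e (univ.erase e)).powerset := by
    rw [insert_erase (mem_univ e)]; simp
  rw [hu, sum_powerset_insert (notMem_erase e univ), ← sum_add_distrib]
  refine sum_congr rfl fun X hX => ?_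
  have heX : e ∉ X := fun h => notMem_erase e univ (mem_powerset.1 hX h)
  have w1 : subsetWeight q X =
      (1 - q e) * ∏ x ∈ univ.erase e, if x ∈ X then q x else 1 - q x := by
    unfold subsetWeight
    rw [← mul_prod_erase univ _ (mem_univ e), if_neg heX]
  have w2 : subsetWeight q (insert e X) =
      q e * ∏ x ∈ univ.erase e, if x ∈ X then q x else 1 - q x := by
    unfold subsetWeight
    rw [← mul_prod_erase univ _ (mem_univ e), if_pos (mem_insert_self e X)]
    congr 1
    refine prod_congr rfl fun x hx => ?_
    simp [mem_insert, (mem_erase.1 hx).1]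
  rw [w1, w2]; ring

/-- Conditioning on `S ⊆ X` has the same effect as replacing `X` by `S ∪ X`. -/
lemma subsetExp_subInd_mul (S : Finset α) (φ : Finset α → ℝ) :
    subsetExp q (fun X => subInd S X * φ X)
      = (∏ e ∈ S, q e) * subsetExp q (fun X => φ (S ∪ X)) := by
  induction S using Finset.induction_on generalizing φ with
  | empty => simp [subInd]
  | insert e S he ih =>
    have hsplit : ∀ X : Finset α,
        subInd (insert e S) X * φ X = subInd S X * (subInd {e} X * φ X) := by
      intro X
      unfold subInd
      by_cases h1 : e ∈ X <;> by_cases h2 : S ⊆ X <;> simp [h1, h2, insert_subset_iff]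
    have hone : ∀ ψ : Finset α → ℝ, subsetExp q (fun X => subInd {e} X * ψ X)
        = q e * subsetExp q (fun X => ψ (insert e X)) := by
      intro ψ
      rw [subsetExp_split e, subsetExp_split e, mul_sum]
      refine sum_congr rfl fun X hX => ?_
      have heX : e ∉ X := fun h => notMem_erase e univ (mem_powerset.1 hX h)
      simp [subInd, heX]
      ring
    have h2 : ∀ X, subInd {e} (S ∪ X) = subInd {e} X := by
      intro X; simp [subInd, he]
    simp_rw [hsplit]
    rw [ih (fun X => subInd {e} X * φ X)]
    simp_rw [h2]
    rw [hone (fun X => φ (S ∪ X)), prod_insert he]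
    have h3 : ∀ X, S ∪ insert e X = insert e S ∪ X := by
      intro X; ext x; simp
    simp_rw [h3]
    ring

lemma subsetExp_one : subsetExp q (fun _ => 1) = 1 := by
  have := Fintype.prod_add (fun e => q e) (fun e => 1 - q e)
  simp only [add_sub_cancel, prod_const_one] at this
  refine Eq.trans ?_ this.symm
  unfold subsetExp subsetWeight
  refine sum_congr rfl fun X _ => ?_
  rw [mul_one, prod_ite]
  congr 1 <;> refine prod_congr ?_ fun _ _ => rfl <;> ext <;> simp

lemma subsetExp_subInd (S : Finset α) : subsetExp q (subInd S) = ∏ e ∈ S, q e := by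
  have := subsetExp_subInd_mul (q := q) S (fun _ => 1)
  simpa [subsetExp_one] using this

/-- Harris' inequality for two increasing functions. -/
lemma subsetExp_mul_le (h0 : ∀ e, 0 ≤ q e) (h1 : ∀ e, q e ≤ 1) {φ ψ : Finset α → ℝ}
    (hφ0 : ∀ X, 0 ≤ φ X) (hψ0 : ∀ X, 0 ≤ ψ X) (hφ : Monotone φ) (hψ : Monotone ψ) :
    subsetExp q φ * subsetExp q ψ ≤ subsetExp q (fun X => φ X * ψ X) := by
  have := fkg (μ := subsetWeight q) (f := φ) (g := ψ) (subsetWeight_nonneg h0 h1) hφ0 hψ0 hφ hψ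
    (fun a b => (subsetWeight_mul a b).le)
  have h : ∑ a, subsetWeight q a = 1 := by simpa [subsetExp] using subsetExp_one (q := q)
  rw [h, one_mul] at this
  exact this

/-- Harris' inequality for a decreasing event and an increasing function. -/
lemma subsetExp_avoid_mul_le (h0 : ∀ e, 0 ≤ q e) (h1 : ∀ e, q e ≤ 1) (𝒟 : Finset (Finset α))
    {ψ : Finset α → ℝ} (hψ0 : ∀ X, 0 ≤ ψ X) (hψ : Monotone ψ) :
    subsetExp q (fun X => avoidInd 𝒟 X * ψ X)
      ≤ subsetExp q (avoidInd 𝒟) * subsetExp q ψ := by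
  have h := subsetExp_mul_le h0 h1 (φ := fun X => 1 - avoidInd 𝒟 X) (ψ := ψ)
    (fun X => sub_nonneg.2 (avoidInd_le_one 𝒟 X)) hψ0
    (fun X Y hXY => sub_le_sub_left (avoidInd_antitone 𝒟 hXY) 1) hψ
  have e1 : subsetExp q (fun X => 1 - avoidInd 𝒟 X) = 1 - subsetExp q (avoidInd 𝒟) := by
    rw [subsetExp_sub (fun _ => 1), subsetExp_one]
  have e2 : subsetExp q (fun X => (1 - avoidInd 𝒟 X) * ψ X)
      = subsetExp q ψ - subsetExp q (fun X => avoidInd 𝒟 X * ψ X) := by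
    rw [← subsetExp_sub]; congr 1; ext X; ring
  rw [e1, e2] at h
  linarith

lemma subsetExp_avoid_nonneg (h0 : ∀ e, 0 ≤ q e) (h1 : ∀ e, q e ≤ 1) (𝒟 : Finset (Finset α)) :
    0 ≤ subsetExp q (avoidInd 𝒟) :=
  sum_nonneg fun X _ => mul_nonneg (subsetWeight_nonneg h0 h1 X) (avoidInd_nonneg 𝒟 X)

lemma subsetExp_avoid_insert (S : Finset α) (𝒟 : Finset (Finset α)) :
    subsetExp q (avoidInd (insert S 𝒟))
      = subsetExp q (avoidInd 𝒟) - subsetExp q (fun X => subInd S X * avoidInd 𝒟 X) := by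
  rw [← subsetExp_sub]; congr 1; ext X; rw [avoidInd_insert]; ring

/-- Harris' lower bound for the probability of avoiding a family of sets. -/
lemma prod_le_subsetExp_avoid (h0 : ∀ e, 0 ≤ q e) (h1 : ∀ e, q e ≤ 1)
    (𝒟 : Finset (Finset α)) :
    ∏ S ∈ 𝒟, (1 - ∏ e ∈ S, q e) ≤ subsetExp q (avoidInd 𝒟) := by
  induction 𝒟 using Finset.induction_on with
  | empty =>
    have : avoidInd (∅ : Finset (Finset α)) = fun _ => 1 := by ext; simp [avoidInd]
    simp [this, subsetExp_one]
  | insert S 𝒟 hS ih =>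
    rw [prod_insert hS, subsetExp_avoid_insert]
    have h := subsetExp_avoid_mul_le h0 h1 𝒟 (subInd_nonneg S) (subInd_monotone S)
    rw [subsetExp_subInd] at h
    have hp : ∏ e ∈ S, q e ≤ 1 := prod_le_one (fun e _ => h0 e) fun e _ => h1 e
    have h' := mul_le_mul_of_nonneg_left ih (sub_nonneg.2 hp)
    have hc : subsetExp q (fun X => avoidInd 𝒟 X * subInd S X)
        = subsetExp q (fun X => subInd S X * avoidInd 𝒟 X) := by
      congr 1; ext X; ring
    rw [hc] at h
    linarith

/-- One step of Janson's inequality: the conditional probability of containing `S`, given that `𝒟`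
is avoided, falls short of its unconditional value by at most the total probability of containing `S ∪ T`, over
the members `T` of `𝒟` meeting `S`. -/
lemma subsetExp_avoid_insert_le (h0 : ∀ e, 0 ≤ q e) (h1 : ∀ e, q e ≤ 1)
    (S : Finset α) (𝒟 : Finset (Finset α)) :
    subsetExp q (avoidInd (insert S 𝒟)) ≤ subsetExp q (avoidInd 𝒟) *
      (1 - ∏ e ∈ S, q e + ∑ T ∈ 𝒟 with ¬ Disjoint S T, ∏ e ∈ S ∪ T, q e) := by
  classical
  rw [subsetExp_avoid_insert]
  set P := ∏ e ∈ S, q e with hP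
  have hP0 : 0 ≤ P := prod_nonneg fun e _ => h0 e
  -- `𝒟₀` is independent of `S`; `E₀ - (terms from 𝒟₁)` bounds the conditional probability below
  set 𝒟₀ := 𝒟.filter (fun T => Disjoint S T) with h𝒟₀
  set 𝒟₁ := 𝒟.filter (fun T => ¬ Disjoint S T) with h𝒟₁
  have hu : 𝒟 = 𝒟₀ ∪ 𝒟₁ := (filter_union_filter_not_eq _ 𝒟).symm
  set E₀ := subsetExp q (avoidInd 𝒟₀)
  set E := subsetExp q (avoidInd 𝒟)
  have hE : 0 ≤ E := subsetExp_avoid_nonneg h0 h1 𝒟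
  have hEE : E ≤ E₀ := subsetExp_mono h0 h1 fun X => avoidInd_anti (filter_subset _ _) X
  set σ := ∑ T ∈ 𝒟₁, subsetExp q (fun X => subInd T (S ∪ X)) with hσ
  have hσP : P * σ = ∑ T ∈ 𝒟₁, ∏ e ∈ S ∪ T, q e := by
    rw [hσ, mul_sum]
    refine sum_congr rfl fun T _ => ?_
    rw [hP, ← subsetExp_subInd_mul S (subInd T), ← subsetExp_subInd]
    congr 1; ext X
    unfold subInd
    by_cases h1 : S ⊆ X <;> by_cases h2 : T ⊆ X <;> simp [h1, h2, union_subset_iff]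
  rw [subsetExp_subInd_mul S, ← hσP]
  have key : E₀ * (1 - σ) ≤ subsetExp q (fun X => avoidInd 𝒟 (S ∪ X)) := by
    have hpt : ∀ X, avoidInd 𝒟₀ X - ∑ T ∈ 𝒟₁, avoidInd 𝒟₀ X * subInd T (S ∪ X)
        ≤ avoidInd 𝒟 (S ∪ X) := by
      intro X
      have hd : avoidInd 𝒟₀ (S ∪ X) = avoidInd 𝒟₀ X := by
        unfold avoidInd
        have : (∀ T ∈ 𝒟₀, ¬ T ⊆ S ∪ X) ↔ (∀ T ∈ 𝒟₀, ¬ T ⊆ X) := by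
          refine forall₂_congr fun T hT => not_congr ⟨fun h x hx => ?_, fun h =>
            h.trans subset_union_right⟩
          rcases mem_union.1 (h hx) with h' | h'
          · exact absurd hx (disjoint_left.1 (mem_filter.1 hT).2 h')
          · exact h'
        by_cases h : ∀ T ∈ 𝒟₀, ¬ T ⊆ X
        · rw [if_pos h, if_pos (this.2 h)]
        · rw [if_neg h, if_neg (mt this.1 h)]
      rw [hu, avoidInd_union, hd, ← mul_sum]
      have h3 := one_sub_sum_le_avoidInd 𝒟₁ (S ∪ X)
      have h4 := mul_le_mul_of_nonneg_left h3 (avoidInd_nonneg 𝒟₀ X)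
      linarith
    refine le_trans ?_ (subsetExp_mono h0 h1 hpt)
    rw [subsetExp_sub, subsetExp_sum, mul_sub, mul_one, hσ, mul_sum]
    refine sub_le_sub_left (sum_le_sum fun T _ => ?_) _
    exact subsetExp_avoid_mul_le h0 h1 𝒟₀ (fun X => subInd_nonneg T _)
      fun X Y h => subInd_monotone T (union_subset_union_right h)
  have hnn : 0 ≤ subsetExp q (fun X => avoidInd 𝒟 (S ∪ X)) :=
    sum_nonneg fun X _ => mul_nonneg (subsetWeight_nonneg h0 h1 X) (avoidInd_nonneg 𝒟 _)
  -- if `σ > 1` the bound is trivial; otherwise `E ≤ E₀` may be used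
  have key2 : E * (1 - σ) ≤ subsetExp q (fun X => avoidInd 𝒟 (S ∪ X)) := by
    rcases le_total 0 (1 - σ) with h | h
    · exact (mul_le_mul_of_nonneg_right hEE h).trans key
    · exact (mul_nonpos_of_nonneg_of_nonpos hE h).trans hnn
  have := mul_le_mul_of_nonneg_left key2 hP0
  linarith

/-- Janson's inequality, in the weaker form where the correlation sum runs over ordered pairs without
the usual factor `1/2`. -/
lemma subsetExp_avoid_le (h0 : ∀ e, 0 ≤ q e) (h1 : ∀ e, q e ≤ 1) (𝒟 : Finset (Finset α)) :
    subsetExp q (avoidInd 𝒟) ≤ Real.exp (-(∑ S ∈ 𝒟, ∏ e ∈ S, q e) +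
      ∑ S ∈ 𝒟, ∑ T ∈ 𝒟 with S ≠ T ∧ ¬ Disjoint S T, ∏ e ∈ S ∪ T, q e) := by
  classical
  induction 𝒟 using Finset.induction_on with
  | empty =>
    have : avoidInd (∅ : Finset (Finset α)) = fun _ => 1 := by ext; simp [avoidInd]
    simp [this, subsetExp_one]
  | insert S 𝒟 hS ih =>
    have hpos : ∀ X : Finset α, 0 ≤ ∏ e ∈ X, q e := fun X => prod_nonneg fun e _ => h0 e
    have hstep := subsetExp_avoid_insert_le h0 h1 S 𝒟
    set d := ∑ T ∈ 𝒟 with ¬ Disjoint S T, ∏ e ∈ S ∪ T, q e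
    have hA : subsetExp q (avoidInd (insert S 𝒟))
        ≤ subsetExp q (avoidInd 𝒟) * Real.exp (-(∏ e ∈ S, q e) + d) := by
      refine hstep.trans (mul_le_mul_of_nonneg_left ?_ (subsetExp_avoid_nonneg h0 h1 𝒟))
      have := Real.add_one_le_exp (-(∏ e ∈ S, q e) + d)
      linarith
    refine (hA.trans (mul_le_mul_of_nonneg_right ih (Real.exp_pos _).le)).trans ?_
    rw [← Real.exp_add]
    apply Real.exp_le_exp.2
    rw [sum_insert hS, sum_insert hS]
    have h2 : d ≤ ∑ T ∈ insert S 𝒟 with S ≠ T ∧ ¬ Disjoint S T, ∏ e ∈ S ∪ T, q e := by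
      refine sum_le_sum_of_subset_of_nonneg ?_ fun T _ _ => hpos _
      intro T hT
      rw [mem_filter] at hT ⊢
      exact ⟨mem_insert_of_mem hT.1, fun h => hS (h ▸ hT.1), hT.2⟩
    have h3 : ∑ R ∈ 𝒟, ∑ T ∈ 𝒟 with R ≠ T ∧ ¬ Disjoint R T, ∏ e ∈ R ∪ T, q e
        ≤ ∑ R ∈ 𝒟, ∑ T ∈ insert S 𝒟 with R ≠ T ∧ ¬ Disjoint R T, ∏ e ∈ R ∪ T, q e := by
      refine sum_le_sum fun R _ => sum_le_sum_of_subset_of_nonneg ?_ fun T _ _ => hpos _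
      exact filter_subset_filter _ (subset_insert _ _)
    linarith

end RandomSubset

/-! ### Edge sets of cycles -/

section CycleSets

open Finset

/-- Induction around the cycle `Fin (k + 3)`, where addition is modulo `k + 3`. -/
lemma cyclic_induction {k : ℕ} {P : Fin (k + 3) → Prop} (i₀ : Fin (k + 3)) (h0 : P i₀)
    (hs : ∀ i, P i → P (i + 1)) (i : Fin (k + 3)) : P i := by
  have h : ∀ j : Fin (k + 3), P (i₀ + j) := by
    intro j
    induction j using Fin.induction with
    | zero => simpa using h0
    | succ j ih =>
      have := hs _ ih
      rwa [add_assoc, Fin.coeSucc_eq_succ] at this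
  simpa using h (i - i₀)

lemma fin_one_add_one_ne_zero (k : ℕ) : (1 : Fin (k + 3)) + 1 ≠ 0 := by
  intro h
  have := congrArg Fin.val h
  simp [Fin.val_add] at this
  rw [Nat.mod_eq_of_lt (by omega)] at this
  omega

variable {V : Type*} [DecidableEq V]

/-- The edge set of the closed walk `a 0, a 1, …, a (k + 2), a 0`; for injective `a` this is a
cycle of length `k + 3`. -/
def cycEdges {k : ℕ} (a : Fin (k + 3) → V) : Finset (Sym2 V) :=
  univ.image fun i => s(a i, a (i + 1))

/-- The set of endpoints of a set of edges. -/
def endpoints [Fintype V] (S : Finset (Sym2 V)) : Finset V :=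
  univ.filter fun v => ∃ e ∈ S, v ∈ e

lemma mem_cycEdges {k : ℕ} {a : Fin (k + 3) → V} {e : Sym2 V} :
    e ∈ cycEdges a ↔ ∃ i, s(a i, a (i + 1)) = e := by simp [cycEdges]

lemma cycEdges_edge_injective {k : ℕ} {a : Fin (k + 3) → V} (ha : a.Injective) :
    Function.Injective fun i => s(a i, a (i + 1)) := by
  intro i j h
  rcases Sym2.eq_iff.1 h with ⟨h, _⟩ | ⟨h1, h2⟩
  · exact ha h
  · have h1 := ha h1
    have h2 := ha h2
    rw [h1, add_assoc] at h2
    exact absurd (by simpa using h2) (fin_one_add_one_ne_zero k)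

lemma card_cycEdges {k : ℕ} {a : Fin (k + 3) → V} (ha : a.Injective) :
    (cycEdges a).card = k + 3 := by
  rw [cycEdges, card_image_of_injective _ (cycEdges_edge_injective ha)]; simp

/-- A chord joining two vertices of a cycle is one of its edges exactly when the positions are cyclically
adjacent. -/
lemma mk_mem_cycEdges {k : ℕ} {a : Fin (k + 3) → V} (ha : a.Injective) {i j : Fin (k + 3)} :
    s(a i, a j) ∈ cycEdges a ↔ j = i + 1 ∨ i = j + 1 := by
  rw [mem_cycEdges]
  constructor
  · rintro ⟨l, hl⟩
    rcases Sym2.eq_iff.1 hl with ⟨h1, h2⟩ | ⟨h1, h2⟩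
    · left; rw [← ha h1, ← ha h2]
    · right; rw [← ha h1, ← ha h2]
  · rintro (rfl | rfl)
    · exact ⟨i, rfl⟩
    · exact ⟨j, Sym2.eq_swap⟩

lemma not_isDiag_of_mem_cycEdges {k : ℕ} {a : Fin (k + 3) → V} (ha : a.Injective) {e : Sym2 V}
    (he : e ∈ cycEdges a) : ¬ e.IsDiag := by
  obtain ⟨i, rfl⟩ := mem_cycEdges.1 he
  rw [Sym2.mk_isDiag_iff]
  intro h
  simpa using ha h

/-- Two injective parametrisations of the same cycle differ by a rotation or a reflection. -/
lemma cycEdges_eq_iff {k : ℕ} {a b : Fin (k + 3) → V} (ha : a.Injective) (hb : b.Injective) :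
    cycEdges b = cycEdges a ↔ ∃ r, (∀ i, b i = a (r + i)) ∨ (∀ i, b i = a (r - i)) := by
  constructor
  · intro h
    have hmem : ∀ i, ∃ r, b i = a r := by
      intro i
      have : s(b i, b (i + 1)) ∈ cycEdges a := h ▸ mem_cycEdges.2 ⟨i, rfl⟩
      obtain ⟨l, hl⟩ := mem_cycEdges.1 this
      rcases Sym2.eq_iff.1 hl with ⟨h1, _⟩ | ⟨_, h1⟩
      exacts [⟨_, h1.symm⟩, ⟨_, h1.symm⟩]
    choose f hf using hmem
    have hfinj : f.Injective := fun i j hij => hb (by rw [hf, hf, hij])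
    have hadj : ∀ i, f (i + 1) = f i + 1 ∨ f i = f (i + 1) + 1 := by
      intro i
      have : s(b i, b (i + 1)) ∈ cycEdges a := h ▸ mem_cycEdges.2 ⟨i, rfl⟩
      rwa [hf i, hf (i + 1), mk_mem_cycEdges ha] at this
    -- a step in one direction cannot be followed by a step back, by injectivity
    have hne : ∀ i, f (i + 1 + 1) ≠ f i := by
      intro i hi
      have := hfinj hi
      rw [add_assoc] at this
      exact fin_one_add_one_ne_zero k (by simpa using this)
    refine ⟨f 0, ?_⟩
    rcases hadj 0 with h0 | h0
    · left
      have hstep : ∀ i, f (i + 1) = f i + 1 := by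
        refine cyclic_induction 0 h0 fun i hi => ?_
        rcases hadj (i + 1) with h1 | h1
        · exact h1
        · exact absurd (add_right_cancel (hi ▸ h1)).symm (hne i)
      intro i
      rw [hf]
      congr 1
      refine cyclic_induction (P := fun i => f i = f 0 + i) 0 (by simp) (fun i hi => ?_) i
      rw [hstep, hi, add_assoc]
    · right
      have hstep : ∀ i, f i = f (i + 1) + 1 := by
        refine cyclic_induction 0 h0 fun i hi => ?_
        rcases hadj (i + 1) with h1 | h1
        · exact absurd (h1.trans hi.symm) (hne i)
        · exact h1
      intro i
      rw [hf]
      congr 1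
      refine cyclic_induction (P := fun i => f i = f 0 - i) 0 (by simp) (fun i hi => ?_) i
      have := hstep i
      rw [hi] at this
      rw [sub_add_eq_sub_sub, this]
      simp
  · rintro ⟨r, h | h⟩
    · ext e
      rw [mem_cycEdges, mem_cycEdges]
      constructor
      · rintro ⟨i, rfl⟩; exact ⟨r + i, by rw [h, h, add_assoc]⟩
      · rintro ⟨i, rfl⟩
        refine ⟨i - r, ?_⟩
        rw [h, h, ← add_assoc, add_sub_cancel]
    · ext e
      rw [mem_cycEdges, mem_cycEdges]
      constructor
      · rintro ⟨i, rfl⟩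
        refine ⟨r - (i + 1), ?_⟩
        rw [h, h, Sym2.eq_swap]
        congr 3
        abel
      · rintro ⟨i, rfl⟩
        refine ⟨r - (i + 1), ?_⟩
        rw [h, h, Sym2.eq_swap]
        congr 3 <;> abel

variable [Fintype V]

variable (V) in
/-- The edge sets of the cycles of length `k + 3` in the complete graph on `V`. -/
noncomputable def cyclesOfLength (k : ℕ) : Finset (Finset (Sym2 V)) :=
  univ.image fun a : Fin (k + 3) ↪ V => cycEdges a

lemma mem_cyclesOfLength {k : ℕ} {S : Finset (Sym2 V)} :
    S ∈ cyclesOfLength V k ↔ ∃ a : Fin (k + 3) ↪ V, cycEdges a = S := by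
  simp [cyclesOfLength]

lemma card_of_mem_cyclesOfLength {k : ℕ} {S : Finset (Sym2 V)} (hS : S ∈ cyclesOfLength V k) :
    S.card = k + 3 := by
  obtain ⟨a, rfl⟩ := mem_cyclesOfLength.1 hS
  exact card_cycEdges a.injective

/-- A cycle of length `k + 3` has `2 (k + 3)` parametrisations: `k + 3` rotations and `k + 3`
reflections. -/
lemma card_cycEdges_fiber {k : ℕ} (a : Fin (k + 3) ↪ V) :
    (univ.filter fun b : Fin (k + 3) ↪ V => cycEdges b = cycEdges a).card = 2 * (k + 3) := by
  let F : Fin (k + 3) × Bool → (Fin (k + 3) ↪ V) := fun x =>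
    if x.2 then (Equiv.addLeft x.1).toEmbedding.trans a
    else (Equiv.subLeft x.1).toEmbedding.trans a
  have hFt : ∀ r i, F (r, true) i = a (r + i) := fun r i => by simp [F]
  have hFf : ∀ r i, F (r, false) i = a (r - i) := fun r i => by simp [F]
  have hne : ∀ r r', F (r, true) ≠ F (r', false) := by
    intro r r' h
    have h0 := DFunLike.congr_fun h 0
    have h1 := DFunLike.congr_fun h 1
    rw [hFt, hFf] at h0 h1
    have h0 := a.injective h0
    have h1 := a.injective h1
    simp only [add_zero, sub_zero] at h0
    rw [h0, sub_eq_add_neg] at h1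
    have h2 := add_left_cancel h1
    exact fin_one_add_one_ne_zero k (by nth_rewrite 1 [h2]; simp)
  have hFinj : F.Injective := by
    rintro ⟨r, _ | _⟩ ⟨r', _ | _⟩ h
    · have h0 := DFunLike.congr_fun h 0
      rw [hFf, hFf] at h0
      have := a.injective h0
      simp at this; simp [this]
    · exact absurd h.symm (hne _ _)
    · exact absurd h (hne _ _)
    · have h0 := DFunLike.congr_fun h 0
      rw [hFt, hFt] at h0
      have := a.injective h0
      simp at this; simp [this]
  have hfib : (univ.filter fun b : Fin (k + 3) ↪ V => cycEdges b = cycEdges a)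
      = univ.image F := by
    ext b
    simp only [mem_filter, mem_univ, true_and, mem_image, Prod.exists, Bool.exists_bool]
    rw [cycEdges_eq_iff a.injective b.injective]
    refine exists_congr fun r => ?_
    rw [or_comm]
    refine or_congr ⟨fun h => ?_, fun h i => ?_⟩ ⟨fun h => ?_, fun h i => ?_⟩
    · ext i; rw [hFf, h]
    · rw [← h, hFf]
    · ext i; rw [hFt, h]
    · rw [← h, hFt]
  rw [hfib, card_image_of_injective _ hFinj]
  simp; ring

lemma card_cyclesOfLength (k : ℕ) :
    2 * (k + 3) * (cyclesOfLength V k).card = (Fintype.card V).descFactorial (k + 3) := by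
  have h1 := Fintype.card_embedding_eq (α := Fin (k + 3)) (β := V)
  rw [Fintype.card_fin] at h1
  rw [← h1, ← card_univ,
    card_eq_sum_card_image (fun a : Fin (k + 3) ↪ V => cycEdges (a : Fin (k + 3) → V)) univ]
  change _ = ∑ S ∈ cyclesOfLength V k, _
  rw [sum_const_nat (m := 2 * (k + 3)), mul_comm]
  intro S hS
  obtain ⟨a, rfl⟩ := mem_cyclesOfLength.1 hS
  exact card_cycEdges_fiber a

lemma endpoints_union (S T : Finset (Sym2 V)) :
    endpoints (S ∪ T) = endpoints S ∪ endpoints T := by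
  ext v; simp only [endpoints, mem_filter, mem_univ, true_and, mem_union]
  constructor
  · rintro ⟨e, h | h, hv⟩
    exacts [Or.inl ⟨e, h, hv⟩, Or.inr ⟨e, h, hv⟩]
  · rintro (⟨e, h, hv⟩ | ⟨e, h, hv⟩)
    exacts [⟨e, Or.inl h, hv⟩, ⟨e, Or.inr h, hv⟩]

lemma endpoints_cycEdges {k : ℕ} (a : Fin (k + 3) → V) :
    endpoints (cycEdges a) = univ.image a := by
  ext v
  simp only [endpoints, mem_filter, mem_univ, true_and, mem_cycEdges, mem_image]
  constructor
  · rintro ⟨e, ⟨i, rfl⟩, hv⟩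
    rcases Sym2.mem_iff.1 hv with rfl | rfl
    exacts [⟨_, rfl⟩, ⟨_, rfl⟩]
  · rintro ⟨i, rfl⟩
    exact ⟨_, ⟨i, rfl⟩, Sym2.mem_mk_left _ _⟩

/-- Each vertex of the first cycle outside the second one is charged to the edge leaving it, which
is not an edge of the second cycle; the first cycle also leaves the second one somewhere, and
that edge is charged by no vertex. -/
lemma card_endpoints_lt_of_not_subset {k l : ℕ} {a : Fin (k + 3) → V} {b : Fin (l + 3) → V}
    (ha : a.Injective) (hb : b.Injective) (hsub : ¬ cycEdges a ⊆ cycEdges b)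
    (hdis : ¬ Disjoint (cycEdges a) (cycEdges b)) :
    (endpoints (cycEdges a ∪ cycEdges b)).card < (cycEdges a ∪ cycEdges b).card := by
  have hleft : ∀ i, s(a i, a (i + 1)) ∈ cycEdges b → a i ∈ univ.image b := by
    intro i hi
    rw [← endpoints_cycEdges]
    simp only [endpoints, mem_filter, mem_univ, true_and]
    exact ⟨_, hi, Sym2.mem_mk_left _ _⟩
  have hright : ∀ i, s(a i, a (i + 1)) ∈ cycEdges b → a (i + 1) ∈ univ.image b := by
    intro i hi
    rw [← endpoints_cycEdges]
    simp only [endpoints, mem_filter, mem_univ, true_and]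
    exact ⟨_, hi, Sym2.mem_mk_right _ _⟩
  set I := univ.filter fun i => a i ∉ univ.image b with hI
  set J := univ.filter fun i => s(a i, a (i + 1)) ∉ cycEdges b with hJ
  -- if every edge of `a` starting in `b` belonged to `b`, following `a` from a shared edge would
  -- place all of `a` inside `b`
  have hIJ : I ⊂ J := by
    refine ⟨fun i hi => ?_, fun hJI => hsub ?_⟩
    · rw [hI, mem_filter] at hi
      rw [hJ, mem_filter]
      exact ⟨mem_univ _, fun h => hi.2 (hleft i h)⟩
    · have hstay : ∀ i, a i ∈ univ.image b → s(a i, a (i + 1)) ∈ cycEdges b := by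
        intro i hi
        by_contra hcon
        have : i ∈ I := hJI (by rw [hJ, mem_filter]; exact ⟨mem_univ _, hcon⟩)
        rw [hI, mem_filter] at this
        exact this.2 hi
      obtain ⟨e, hea, heb⟩ := not_disjoint_iff.1 hdis
      obtain ⟨i₀, rfl⟩ := mem_cycEdges.1 hea
      have hall := cyclic_induction (P := fun i => a i ∈ univ.image b) i₀ (hleft _ heb)
        fun i hi => hright i (hstay i hi)
      intro e he
      obtain ⟨i, rfl⟩ := mem_cycEdges.1 he
      exact hstay i (hall i)
  have hcI : (univ.image a \ univ.image b).card = I.card := by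
    rw [← card_image_of_injective I ha]
    congr 1
    ext v
    simp only [hI, Finset.mem_sdiff, mem_image, mem_univ, true_and, mem_filter]
    constructor
    · rintro ⟨⟨i, rfl⟩, h⟩; exact ⟨i, h, rfl⟩
    · rintro ⟨i, h, rfl⟩; exact ⟨⟨i, rfl⟩, h⟩
  have hcJ : (cycEdges a \ cycEdges b).card = J.card := by
    rw [← card_image_of_injective J (cycEdges_edge_injective ha)]
    congr 1
    ext e
    simp only [hJ, Finset.mem_sdiff, mem_cycEdges (a := a), mem_image, mem_univ, true_and, mem_filter]
    constructor
    · rintro ⟨⟨i, rfl⟩, h⟩; exact ⟨i, h, rfl⟩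
    · rintro ⟨i, h, rfl⟩; exact ⟨⟨i, rfl⟩, h⟩
  have hcb : (univ.image b).card = (cycEdges b).card := by
    rw [card_cycEdges hb, card_image_of_injective _ hb]; simp
  rw [endpoints_union, endpoints_cycEdges, endpoints_cycEdges, ← sdiff_union_self_eq_union,
    card_union_of_disjoint sdiff_disjoint, ← sdiff_union_self_eq_union (s := cycEdges a),
    card_union_of_disjoint sdiff_disjoint, hcI, hcJ, hcb]
  exact Nat.add_lt_add_right (card_lt_card hIJ) _

/-- The union of two distinct cycles sharing an edge has more edges than vertices. -/
lemma card_endpoints_lt {k l : ℕ} {S T : Finset (Sym2 V)} (hS : S ∈ cyclesOfLength V k)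
    (hT : T ∈ cyclesOfLength V l) (hne : S ≠ T) (hdis : ¬ Disjoint S T) :
    (endpoints (S ∪ T)).card < (S ∪ T).card := by
  obtain ⟨a, rfl⟩ := mem_cyclesOfLength.1 hS
  obtain ⟨b, rfl⟩ := mem_cyclesOfLength.1 hT
  by_cases h : cycEdges a ⊆ cycEdges b
  · have h' : ¬ cycEdges b ⊆ cycEdges a := fun h' => hne (h.antisymm h')
    rw [union_comm]
    exact card_endpoints_lt_of_not_subset b.injective a.injective h' fun h => hdis h.symm
  · exact card_endpoints_lt_of_not_subset a.injective b.injective h hdis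

variable (V) in
/-- The edge sets of the cycles in the complete graph on `V` of length less than `J + 3`. -/
noncomputable def cyclesUpTo (J : ℕ) : Finset (Finset (Sym2 V)) := (range J).biUnion (cyclesOfLength V)

lemma sum_cyclesUpTo (J : ℕ) (f : Finset (Sym2 V) → ℝ) :
    ∑ S ∈ cyclesUpTo V J, f S = ∑ k ∈ range J, ∑ S ∈ cyclesOfLength V k, f S := by
  refine sum_biUnion fun k _ l _ hkl => disjoint_left.2 fun S hS hS' => hkl ?_
  have := (card_of_mem_cyclesOfLength hS).symm.trans (card_of_mem_cyclesOfLength hS')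
  omega

/-- A cycle has at most `|V|` vertices, so the cutoff `|V|` already captures all cycles. -/
lemma cyclesUpTo_subset_card (J : ℕ) : cyclesUpTo V J ⊆ cyclesUpTo V (Fintype.card V) := by
  intro S hS
  obtain ⟨k, _, hk⟩ := mem_biUnion.1 hS
  obtain ⟨a, ha⟩ := mem_cyclesOfLength.1 hk
  have := Fintype.card_le_of_embedding a
  rw [Fintype.card_fin] at this
  exact mem_biUnion.2 ⟨k, mem_range.2 (by omega), hk⟩

end CycleSets

/-! ### From random graphs to random sets of edges -/

section Transfer

open Finset

open scoped Classical in
/-- The edge set of `G` as a finite set. -/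
noncomputable def edgesOf {n : ℕ} (G : SimpleGraph (Fin n)) : Finset (Sym2 (Fin n)) :=
  univ.filter fun e => e ∈ G.edgeSet

lemma mem_edgesOf {n : ℕ} {G : SimpleGraph (Fin n)} {e : Sym2 (Fin n)} :
    e ∈ edgesOf G ↔ e ∈ G.edgeSet := by simp [edgesOf]

/-- The edge probabilities of `G(n,p)` on all unordered pairs; loops have probability `0`. -/
noncomputable def edgeProb (n : ℕ) (p : ℝ) (e : Sym2 (Fin n)) : ℝ := if e.IsDiag then 0 else p

lemma edgesOf_injective {n : ℕ} : Function.Injective (edgesOf (n := n)) := by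
  intro G H h
  apply SimpleGraph.edgeSet_injective
  ext e
  rw [← mem_edgesOf, h, mem_edgesOf]

lemma card_edgesOf {n : ℕ} (G : SimpleGraph (Fin n)) : (edgesOf G).card = G.edgeSet.ncard := by
  rw [← Set.ncard_coe_finset]
  congr 1
  ext e
  simp [mem_edgesOf]

lemma card_nondiag (n : ℕ) :
    (univ.filter fun e : Sym2 (Fin n) => ¬ e.IsDiag).card = n.choose 2 := by
  rw [← Fintype.card_subtype, Sym2.card_subtype_not_diag, Fintype.card_fin]

lemma subsetWeight_edgesOf {n : ℕ} (p : ℝ) (G : SimpleGraph (Fin n)) :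
    subsetWeight (edgeProb n p) (edgesOf G) = gWeight n p G := by
  have hsub : edgesOf G ⊆ univ.filter fun e : Sym2 (Fin n) => ¬ e.IsDiag := by
    intro e he
    rw [mem_filter]
    exact ⟨mem_univ _, G.not_isDiag_of_mem_edgeSet (mem_edgesOf.1 he)⟩
  unfold subsetWeight gWeight
  rw [← prod_filter_mul_prod_filter_not univ (fun e : Sym2 (Fin n) => ¬ e.IsDiag)]
  have h2 : ∏ e ∈ univ.filter (fun e : Sym2 (Fin n) => ¬ ¬ e.IsDiag),
      (if e ∈ edgesOf G then edgeProb n p e else 1 - edgeProb n p e) = 1 := by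
    refine prod_eq_one fun e he => ?_
    have hd : e.IsDiag := not_not.1 (mem_filter.1 he).2
    have : e ∉ edgesOf G := fun h => (mem_filter.1 (hsub h)).2 hd
    simp [this, edgeProb, hd]
  have h1 : ∏ e ∈ univ.filter (fun e : Sym2 (Fin n) => ¬ e.IsDiag),
      (if e ∈ edgesOf G then edgeProb n p e else 1 - edgeProb n p e)
      = ∏ e ∈ univ.filter (fun e : Sym2 (Fin n) => ¬ e.IsDiag),
      (if e ∈ edgesOf G then p else 1 - p) := by
    refine prod_congr rfl fun e he => ?_
    simp [edgeProb, (mem_filter.1 he).2]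
  rw [h1, h2, mul_one, prod_ite, prod_const, prod_const, filter_mem_eq_inter,
    inter_eq_right.2 hsub, filter_notMem_eq_sdiff, card_sdiff_of_subset hsub, card_nondiag,
    card_edgesOf]

/-- An expectation over `G(n,p)` is one over random subsets of the unordered pairs: subsets containing a
loop have weight `0`, and the others are the edge sets of graphs. -/
lemma gExp_eq {n : ℕ} {p : ℝ} {f : SimpleGraph (Fin n) → ℝ} {F : Finset (Sym2 (Fin n)) → ℝ}
    (h : ∀ G, f G = F (edgesOf G)) : gExp n p f = subsetExp (edgeProb n p) F := by
  unfold gExp subsetExp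
  rw [finsum_eq_sum_of_fintype]
  refine Fintype.sum_of_injective edgesOf edgesOf_injective _ _ (fun X hX => ?_) fun G => ?_
  · -- an outcome that is not the edge set of a graph contains a loop
    have : ∃ e ∈ X, e.IsDiag := by
      by_contra hcon
      push Not at hcon
      refine hX ⟨SimpleGraph.fromEdgeSet X, ?_⟩
      ext e
      rw [mem_edgesOf, SimpleGraph.edgeSet_fromEdgeSet]
      simp only [Set.mem_sdiff, Finset.mem_coe]
      exact ⟨fun h => h.1, fun h => ⟨h, hcon e h⟩⟩
    obtain ⟨e, he, hd⟩ := this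
    rw [subsetWeight, prod_eq_zero (mem_univ e), zero_mul]
    simp [he, edgeProb, hd]
  · rw [subsetWeight_edgesOf, h]

lemma gProb_eq {n : ℕ} {p : ℝ} {A : SimpleGraph (Fin n) → Prop}
    {F : Finset (Sym2 (Fin n)) → ℝ} (h1 : ∀ G, A G → F (edgesOf G) = 1)
    (h0 : ∀ G, ¬ A G → F (edgesOf G) = 0) : gProb n p A = subsetExp (edgeProb n p) F := by
  rw [← gExp_eq (f := fun G => F (edgesOf G)) fun _ => rfl]
  unfold gProb gExp
  congr 1
  ext G
  split_ifs with h
  · simp [h1 G h]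
  · simp [h0 G h]

/-- The cycle subgraphs of `G` correspond to the edge sets of cycles contained in `G`. -/
lemma totalCycleCount_eq {n : ℕ} (G : SimpleGraph (Fin n)) :
    totalCycleCount G = ((cyclesUpTo (Fin n) n).filter (· ⊆ edgesOf G)).card := by
  classical
  unfold totalCycleCount
  set 𝒮 := {H : G.Subgraph | ∃ j, 3 ≤ j ∧ Nonempty (H.coe ≃g SimpleGraph.cycleGraph j)} with h𝒮
  let Φ : G.Subgraph → Finset (Sym2 (Fin n)) := fun H => univ.filter fun e => e ∈ H.edgeSet
  have hΦ : ∀ H e, e ∈ Φ H ↔ e ∈ H.edgeSet := fun H e => by simp [Φ]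
  have hcyc : ∀ H ∈ 𝒮, ∃ k, ∃ a : Fin (k + 3) ↪ Fin n, Φ H = cycEdges a ∧
      H.verts = Set.range a := by
    rintro H ⟨j, hj, ⟨φ⟩⟩
    obtain ⟨k, rfl⟩ := Nat.exists_eq_add_of_le' hj
    have hα : Function.Injective fun i => (φ.symm i).1 :=
      Subtype.val_injective.comp φ.symm.injective
    refine ⟨k, ⟨fun i => (φ.symm i).1, hα⟩, ?_, ?_⟩
    · ext e
      rw [hΦ, mem_cycEdges]
      induction e using Sym2.ind with
      | _ u v =>
      rw [SimpleGraph.Subgraph.mem_edgeSet]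
      constructor
      · intro h
        have hu := H.edge_vert h
        have hv := H.edge_vert h.symm
        have hφ : (SimpleGraph.cycleGraph (k + 3)).Adj (φ ⟨u, hu⟩) (φ ⟨v, hv⟩) :=
          φ.map_rel_iff.2 h
        rcases SimpleGraph.cycleGraph_adj.1 hφ with h1 | h1
        · have h2 : φ ⟨v, hv⟩ + 1 = φ ⟨u, hu⟩ :=
            (add_comm _ _).trans (sub_eq_iff_eq_add.1 h1).symm
          refine ⟨φ ⟨v, hv⟩, ?_⟩
          change s((φ.symm (φ ⟨v, hv⟩)).1, (φ.symm (φ ⟨v, hv⟩ + 1)).1) = s(u, v)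
          rw [h2]
          simp [Sym2.eq_swap]
        · have h2 : φ ⟨u, hu⟩ + 1 = φ ⟨v, hv⟩ :=
            (add_comm _ _).trans (sub_eq_iff_eq_add.1 h1).symm
          refine ⟨φ ⟨u, hu⟩, ?_⟩
          change s((φ.symm (φ ⟨u, hu⟩)).1, (φ.symm (φ ⟨u, hu⟩ + 1)).1) = s(u, v)
          rw [h2]
          simp
      · rintro ⟨i, hi⟩
        have : H.coe.Adj (φ.symm i) (φ.symm (i + 1)) := by
          rw [φ.symm.map_rel_iff, SimpleGraph.cycleGraph_adj]
          right; simp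
        have : s((φ.symm i).1, (φ.symm (i + 1)).1) ∈ H.edgeSet := this
        rw [← SimpleGraph.Subgraph.mem_edgeSet, ← hi]
        exact this
    · ext v
      constructor
      · intro hv; exact ⟨φ ⟨v, hv⟩, congrArg Subtype.val (φ.symm_apply_apply ⟨v, hv⟩)⟩
      · rintro ⟨i, rfl⟩; exact (φ.symm i).2
  -- a cycle has no isolated vertices, so its edge set determines its vertex set
  have hinj : Set.InjOn Φ 𝒮 := by
    intro H hH H' hH' h
    obtain ⟨k, a, h1, h2⟩ := hcyc H hH
    obtain ⟨l, b, h3, h4⟩ := hcyc H' hH'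
    have hv : H.verts = H'.verts := by
      have := congrArg endpoints (h1.symm.trans (h.trans h3))
      rw [endpoints_cycEdges, endpoints_cycEdges] at this
      have := congrArg (fun s : Finset (Fin n) => (s : Set (Fin n))) this
      rw [h2, h4]
      simpa using this
    refine SimpleGraph.Subgraph.ext hv ?_
    ext u v
    rw [← SimpleGraph.Subgraph.mem_edgeSet, ← SimpleGraph.Subgraph.mem_edgeSet, ← hΦ, ← hΦ, h]
  rw [← hinj.ncard_image, ← Set.ncard_coe_finset]
  congr 1
  ext S
  simp only [Set.mem_image, Finset.coe_filter, Set.mem_ofPred_eq]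
  constructor
  · rintro ⟨H, hH, rfl⟩
    obtain ⟨k, a, h1, -⟩ := hcyc H hH
    have := Fintype.card_le_of_embedding a
    rw [Fintype.card_fin, Fintype.card_fin] at this
    refine ⟨mem_biUnion.2 ⟨k, mem_range.2 (by omega), mem_cyclesOfLength.2 ⟨a, h1.symm⟩⟩, ?_⟩
    intro e he
    exact mem_edgesOf.2 (H.edgeSet_subset ((hΦ H e).1 he))
  · rintro ⟨hS, hSG⟩
    obtain ⟨k, _, hk⟩ := mem_biUnion.1 hS
    obtain ⟨a, rfl⟩ := mem_cyclesOfLength.1 hk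
    let H : G.Subgraph :=
      { verts := Set.range a
        Adj := fun u v => s(u, v) ∈ cycEdges a
        adj_sub := fun {u v} h => mem_edgesOf.1 (hSG h)
        edge_vert := fun {u v} h => by
          have : u ∈ endpoints (cycEdges a) := by
            simp only [endpoints, mem_filter, mem_univ, true_and]
            exact ⟨_, h, Sym2.mem_mk_left _ _⟩
          rw [endpoints_cycEdges] at this
          simpa using this
        symm := ⟨fun u v h => by rw [Sym2.eq_swap]; exact h⟩ }
    refine ⟨H, ⟨k + 3, by omega, ⟨RelIso.symm ⟨Equiv.ofInjective a a.injective, ?_⟩⟩⟩, ?_⟩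
    · intro i j
      change s(a i, a j) ∈ cycEdges a ↔ _
      rw [mk_mem_cycEdges a.injective, SimpleGraph.cycleGraph_adj, sub_eq_iff_eq_add,
        sub_eq_iff_eq_add, or_comm, add_comm 1, add_comm 1]
    · ext e
      rw [hΦ]
      induction e using Sym2.ind with
      | _ u v => exact Iff.rfl

lemma prod_edgeProb_of_nondiag {n : ℕ} (p : ℝ) {S : Finset (Sym2 (Fin n))}
    (hS : ∀ e ∈ S, ¬ e.IsDiag) : ∏ e ∈ S, edgeProb n p e = p ^ S.card := by
  rw [← prod_const]
  exact prod_congr rfl fun e he => by simp [edgeProb, hS e he]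

lemma not_isDiag_of_mem_cyclesUpTo {n J : ℕ} {S : Finset (Sym2 (Fin n))}
    (hS : S ∈ cyclesUpTo (Fin n) J) : ∀ e ∈ S, ¬ e.IsDiag := by
  obtain ⟨k, _, hk⟩ := mem_biUnion.1 hS
  obtain ⟨a, rfl⟩ := mem_cyclesOfLength.1 hk
  exact fun e he => not_isDiag_of_mem_cycEdges a.injective he

/-- The expected number of cycles of length less than `J + 3` in `G(n,p)`. -/
noncomputable def meanCycles (n J : ℕ) (p : ℝ) : ℝ :=
  ∑ S ∈ cyclesUpTo (Fin n) J, p ^ S.card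

lemma sum_prod_edgeProb (n J : ℕ) (p : ℝ) :
    ∑ S ∈ cyclesUpTo (Fin n) J, ∏ e ∈ S, edgeProb n p e = meanCycles n J p :=
  sum_congr rfl fun _ hS => prod_edgeProb_of_nondiag p (not_isDiag_of_mem_cyclesUpTo hS)

/-- Linearity of expectation: each cycle with edge set `S` is present with probability `p ^ |S|`. -/
lemma gExp_totalCycleCount (n : ℕ) (p : ℝ) :
    gExp n p (fun G => (totalCycleCount G : ℝ)) = meanCycles n n p := by
  rw [gExp_eq (F := fun X => ∑ S ∈ cyclesUpTo (Fin n) n, subInd S X), subsetExp_sum,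
    ← sum_prod_edgeProb]
  · exact sum_congr rfl fun S _ => subsetExp_subInd S
  · intro G
    rw [totalCycleCount_eq]
    simp [subInd]

lemma gProb_acyclic (n : ℕ) (p : ℝ) :
    gProb n p (fun G => totalCycleCount G = 0)
      = subsetExp (edgeProb n p) (avoidInd (cyclesUpTo (Fin n) n)) := by
  refine gProb_eq (fun G hG => ?_) fun G hG => ?_ <;>
    rw [totalCycleCount_eq, card_eq_zero, filter_eq_empty_iff] at hG
  · exact if_pos fun S hS => hG hS
  · exact if_neg fun h => hG fun {S} hS => h S hS

lemma meanCycles_eq (n J : ℕ) (p : ℝ) :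
    meanCycles n J p
      = ∑ k ∈ range J, (n.descFactorial (k + 3) : ℝ) * p ^ (k + 3) / (2 * ((k : ℝ) + 3)) := by
  unfold meanCycles
  rw [sum_cyclesUpTo]
  refine sum_congr rfl fun k _ => ?_
  rw [sum_congr rfl fun S hS => by rw [card_of_mem_cyclesOfLength hS], sum_const, nsmul_eq_mul]
  have h := card_cyclesOfLength (V := Fin n) k
  rw [Fintype.card_fin] at h
  rw [← h]
  push_cast
  field_simp

end Transfer

/-! ### Pairs of overlapping short cycles -/

section OverlappingPairs

open Finset

/-- The number of pairs of edge sets (loops allowed) inside a set of `v` vertices. -/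
noncomputable def pairBound (v : ℕ) : ℕ := 2 ^ (v + 1).choose 2 * 2 ^ (v + 1).choose 2

lemma card_pairs_le {n : ℕ} (v : ℕ)
    (Q : Finset (Finset (Sym2 (Fin n)) × Finset (Sym2 (Fin n)))) :
    (Q.filter fun x => (endpoints (x.1 ∪ x.2)).card = v).card ≤ n ^ v * pairBound v := by
  classical
  have hsub : (Q.filter fun x => (endpoints (x.1 ∪ x.2)).card = v)
      ⊆ (powersetCard v (univ : Finset (Fin n))).biUnion
        fun U => U.sym2.powerset ×ˢ U.sym2.powerset := by
    intro x hx
    rw [mem_biUnion]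
    refine ⟨endpoints (x.1 ∪ x.2),
      mem_powersetCard.2 ⟨subset_univ _, (mem_filter.1 hx).2⟩, ?_⟩
    have : x.1 ∪ x.2 ⊆ (endpoints (x.1 ∪ x.2)).sym2 := by
      intro e he
      rw [mem_sym2_iff]
      intro w hw
      simp only [endpoints, mem_filter, mem_univ, true_and]
      exact ⟨e, he, hw⟩
    exact mem_product.2 ⟨mem_powerset.2 (subset_union_left.trans this),
      mem_powerset.2 (subset_union_right.trans this)⟩
  refine (card_le_card hsub).trans ((card_biUnion_le_card_mul _ _ (pairBound v) ?_).trans ?_)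
  · intro U hU
    rw [card_product, card_powerset, card_sym2, (mem_powersetCard.1 hU).2, pairBound]
  · rw [card_powersetCard, card_univ, Fintype.card_fin]
    exact Nat.mul_le_mul_right _ (Nat.choose_le_pow n v)

/-- The total probability of the overlapping pairs of short cycles is `O(1/n)`, because the union
of such a pair has more edges than vertices. -/
lemma overlap_le {n : ℕ} (J : ℕ) {c : ℝ} (hc0 : 0 ≤ c) (hcn : c ≤ n) :
    ∑ S ∈ cyclesUpTo (Fin n) J, ∑ T ∈ cyclesUpTo (Fin n) J with S ≠ T ∧ ¬ Disjoint S T,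
      ∏ e ∈ S ∪ T, edgeProb n (c / n) e
    ≤ (∑ v ∈ range (2 * (J + 3)), (pairBound v : ℝ) * c ^ (v + 1)) / n := by
  classical
  set p := c / (n : ℝ) with hp
  have hp0 : 0 ≤ p := by positivity
  have hp1 : p ≤ 1 := div_le_one_of_le₀ hcn (Nat.cast_nonneg n)
  set 𝒞 := cyclesUpTo (Fin n) J
  set Q := (𝒞 ×ˢ 𝒞).filter fun x => x.1 ≠ x.2 ∧ ¬ Disjoint x.1 x.2 with hQ
  have hsum : ∑ S ∈ 𝒞, ∑ T ∈ 𝒞 with S ≠ T ∧ ¬ Disjoint S T, ∏ e ∈ S ∪ T, edgeProb n p e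
      = ∑ x ∈ Q, ∏ e ∈ x.1 ∪ x.2, edgeProb n p e := by
    rw [hQ, sum_filter, sum_product]
    exact sum_congr rfl fun S _ => sum_filter _ _
  have hfacts : ∀ x ∈ Q, (endpoints (x.1 ∪ x.2)).card + 1 ≤ (x.1 ∪ x.2).card ∧
      (endpoints (x.1 ∪ x.2)).card < 2 * (J + 3) ∧
      ∏ e ∈ x.1 ∪ x.2, edgeProb n p e = p ^ (x.1 ∪ x.2).card := by
    intro x hx
    obtain ⟨hx1, hne, hdis⟩ := mem_filter.1 hx
    obtain ⟨hS, hT⟩ := mem_product.1 hx1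
    obtain ⟨k, hkJ, hk⟩ := mem_biUnion.1 hS
    obtain ⟨l, hlJ, hl⟩ := mem_biUnion.1 hT
    have h1 := card_endpoints_lt hk hl hne hdis
    have h2 := card_union_le x.1 x.2
    rw [card_of_mem_cyclesOfLength hk, card_of_mem_cyclesOfLength hl] at h2
    rw [mem_range] at hkJ hlJ
    refine ⟨h1, by omega, prod_edgeProb_of_nondiag p fun e he => ?_⟩
    rcases mem_union.1 he with he | he
    exacts [not_isDiag_of_mem_cyclesUpTo hS e he, not_isDiag_of_mem_cyclesUpTo hT e he]
  rw [hsum]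
  calc ∑ x ∈ Q, ∏ e ∈ x.1 ∪ x.2, edgeProb n p e
      ≤ ∑ x ∈ Q, p ^ ((endpoints (x.1 ∪ x.2)).card + 1) := by
        refine sum_le_sum fun x hx => ?_
        rw [(hfacts x hx).2.2]
        exact pow_le_pow_of_le_one hp0 hp1 (hfacts x hx).1
    _ = ∑ v ∈ range (2 * (J + 3)),
          ∑ x ∈ Q with (endpoints (x.1 ∪ x.2)).card = v, p ^ (v + 1) :=
        (sum_fiberwise_of_maps_to' (fun x hx => mem_range.2 (hfacts x hx).2.1)
          fun v => p ^ (v + 1)).symm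
    _ ≤ ∑ v ∈ range (2 * (J + 3)), (pairBound v : ℝ) * c ^ (v + 1) / n := by
        refine sum_le_sum fun v _ => ?_
        rw [sum_const, nsmul_eq_mul]
        have h1 : ((Q.filter fun x => (endpoints (x.1 ∪ x.2)).card = v).card : ℝ)
            ≤ (n : ℝ) ^ v * pairBound v := by exact_mod_cast card_pairs_le v Q
        refine (mul_le_mul_of_nonneg_right h1 (by positivity)).trans (le_of_eq ?_)
        rcases Nat.eq_zero_or_pos n with rfl | hn
        · simp [hp]
        · have : (n : ℝ) ≠ 0 := by positivity
          rw [hp, div_pow]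
          field_simp
          ring
    _ = _ := by rw [sum_div]

end OverlappingPairs

/-! ### Limits -/

section Asymptotics

open Finset

/-- The expected number of cycles of length `k + 3` in `G(n,c/n)`. -/
noncomputable def meanTerm (c : ℝ) (n k : ℕ) : ℝ :=
  (n.descFactorial (k + 3) : ℝ) * (c / n) ^ (k + 3) / (2 * ((k : ℝ) + 3))

/-- The limiting expected number of cycles of length `k + 3`. -/
noncomputable def limitTerm (c : ℝ) (k : ℕ) : ℝ := c ^ (k + 3) / (2 * ((k : ℝ) + 3))

lemma hasSum_limitTerm {c : ℝ} (hc0 : 0 < c) (hc1 : c < 1) :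
    HasSum (limitTerm c) (1 / 2 * Real.log (1 / (1 - c)) - c / 2 - c ^ 2 / 4) := by
  have h := Real.hasSum_pow_div_log_of_abs_lt_one (x := c) (by rwa [abs_of_pos hc0])
  have h2 := ((hasSum_nat_add_iff' 2).2 h).mul_left (1 / 2)
  have e1 : limitTerm c = fun i : ℕ => 1 / 2 * (c ^ (i + 2 + 1) / (((i + 2 : ℕ) : ℝ) + 1)) := by
    ext k
    unfold limitTerm
    push_cast
    have : (k : ℝ) + 3 ≠ 0 := by positivity
    rw [show (k : ℝ) + 2 + 1 = k + 3 by ring]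
    field_simp
  have e2 : 1 / 2 * Real.log (1 / (1 - c)) - c / 2 - c ^ 2 / 4
      = 1 / 2 * (-Real.log (1 - c) - ∑ i ∈ range 2, c ^ (i + 1) / ((i : ℝ) + 1)) := by
    rw [one_div (1 - c), Real.log_inv]
    norm_num [sum_range_succ]
    ring
  rw [e1, e2]
  exact h2

lemma tendsto_meanTerm (c : ℝ) (k : ℕ) :
    Tendsto (fun n => meanTerm c n k) atTop (𝓝 (limitTerm c k)) := by
  have h1 : Tendsto (fun n : ℕ => (n.descFactorial (k + 3) : ℝ) / (n : ℝ) ^ (k + 3))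
      atTop (𝓝 1) := by
    refine (Asymptotics.isEquivalent_iff_tendsto_one ?_).1 (isEquivalent_descFactorial (k + 3))
    filter_upwards [eventually_gt_atTop 0] with n hn
    positivity
  have h2 := (h1.mul_const (c ^ (k + 3))).div_const (2 * ((k : ℝ) + 3))
  rw [one_mul] at h2
  refine h2.congr fun n => ?_
  rw [meanTerm, div_pow]
  ring

lemma meanTerm_le {c : ℝ} (hc0 : 0 ≤ c) (n k : ℕ) : ‖meanTerm c n k‖ ≤ c ^ (k + 3) := by
  unfold meanTerm
  rw [Real.norm_of_nonneg (by positivity)]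
  rcases Nat.eq_zero_or_pos n with rfl | hn
  · simp; positivity
  · have hn' : (0 : ℝ) < n := by exact_mod_cast hn
    have h1 : (n.descFactorial (k + 3) : ℝ) ≤ (n : ℝ) ^ (k + 3) := by
      exact_mod_cast Nat.descFactorial_le_pow n (k + 3)
    have h2 : (n.descFactorial (k + 3) : ℝ) * (c / n) ^ (k + 3) ≤ c ^ (k + 3) := by
      rw [div_pow, ← mul_div_assoc, div_le_iff₀ (by positivity), mul_comm]
      exact mul_le_mul_of_nonneg_left h1 (by positivity)
    refine (div_le_self (by positivity) ?_).trans h2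
    have : (0 : ℝ) ≤ k := Nat.cast_nonneg k
    linarith

lemma tendsto_meanCycles {c : ℝ} (hc0 : 0 < c) (hc1 : c < 1) :
    Tendsto (fun n : ℕ => meanCycles n n (c / n)) atTop
      (𝓝 (1 / 2 * Real.log (1 / (1 - c)) - c / 2 - c ^ 2 / 4)) := by
  rw [← (hasSum_limitTerm hc0 hc1).tsum_eq]
  have h : ∀ n : ℕ, meanCycles n n (c / n) = ∑' k, meanTerm c n k := by
    intro n
    rw [meanCycles_eq, tsum_eq_sum (s := range n)]
    · rfl
    · intro k hk
      rw [mem_range, not_lt] at hk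
      rw [meanTerm, Nat.descFactorial_of_lt (by omega)]
      simp
  simp_rw [h]
  have hs : Summable fun k : ℕ => c ^ (k + 3) :=
    (summable_nat_add_iff 3).2 (summable_geometric_of_lt_one hc0.le hc1)
  -- `n.descFactorial j ≤ n ^ j` makes `c ^ j` a summable majorant, uniformly in `n`
  exact tendsto_tsum_of_dominated_convergence hs (tendsto_meanTerm c)
    (Eventually.of_forall fun n k => meanTerm_le hc0.le n k)

lemma tendsto_meanCycles_cutoff (c : ℝ) (J : ℕ) :
    Tendsto (fun n : ℕ => meanCycles n J (c / n)) atTop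
      (𝓝 (∑ k ∈ range J, limitTerm c k)) := by
  simp_rw [meanCycles_eq]
  exact tendsto_finsetSum _ fun k _ => tendsto_meanTerm c k

lemma exp_neg_div_le_one_sub {x p : ℝ} (hx0 : 0 ≤ x) (hxp : x ≤ p) (hp : p < 1) :
    Real.exp (-(x / (1 - p))) ≤ 1 - x := by
  have hx1 : 0 < 1 - x := by linarith
  have h1 : x / (1 - x) ≤ x / (1 - p) :=
    div_le_div_of_nonneg_left hx0 (by linarith) (by linarith)
  have h2 : (1 - x)⁻¹ ≤ Real.exp (x / (1 - p)) := by
    have h3 := Real.add_one_le_exp (x / (1 - x))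
    have h4 : x / (1 - x) + 1 = (1 - x)⁻¹ := by field_simp; ring
    rw [h4] at h3
    exact h3.trans (Real.exp_le_exp.2 h1)
  rw [Real.exp_neg]
  exact inv_le_of_inv_le₀ hx1 h2

lemma edgeProb_mem {n : ℕ} {p : ℝ} (hp0 : 0 ≤ p) (hp1 : p ≤ 1) (e : Sym2 (Fin n)) :
    0 ≤ edgeProb n p e ∧ edgeProb n p e ≤ 1 := by
  unfold edgeProb; split_ifs <;> constructor <;> linarith

/-- The lower bound from Harris' inequality. Dividing by `1 - p` absorbs the error of replacing `1 - x` by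
`exp (-x)`, as every cycle has probability at most `p`. -/
lemma acyclic_lower {n : ℕ} {p : ℝ} (hp0 : 0 ≤ p) (hp1 : p < 1) :
    Real.exp (-(meanCycles n n p / (1 - p))) ≤ gProb n p (fun G => totalCycleCount G = 0) := by
  rw [gProb_acyclic]
  refine le_trans ?_ (prod_le_subsetExp_avoid (fun e => (edgeProb_mem hp0 hp1.le e).1)
    (fun e => (edgeProb_mem hp0 hp1.le e).2) _)
  rw [meanCycles, sum_div, ← sum_neg_distrib, Real.exp_sum]
  refine prod_le_prod (fun _ _ => (Real.exp_pos _).le) fun S hS => ?_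
  rw [prod_edgeProb_of_nondiag p (not_isDiag_of_mem_cyclesUpTo hS)]
  refine exp_neg_div_le_one_sub (by positivity) ?_ hp1
  obtain ⟨k, _, hk⟩ := mem_biUnion.1 hS
  rw [card_of_mem_cyclesOfLength hk]
  exact pow_le_of_le_one hp0 hp1.le (by omega)

/-- The upper bound from Janson's inequality, applied to the cycles of length less than `J + 3` only, so
that the correlation term is `O(1/n)`. -/
lemma acyclic_upper {n : ℕ} (J : ℕ) {c : ℝ} (hc0 : 0 ≤ c) (hcn : c ≤ n) :
    gProb n (c / n) (fun G => totalCycleCount G = 0) ≤ Real.exp (-meanCycles n J (c / n) +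
      (∑ v ∈ range (2 * (J + 3)), (pairBound v : ℝ) * c ^ (v + 1)) / n) := by
  have hp0 : 0 ≤ c / (n : ℝ) := by positivity
  have hp1 : c / (n : ℝ) ≤ 1 := div_le_one_of_le₀ hcn (Nat.cast_nonneg n)
  have h0 := fun e : Sym2 (Fin n) => (edgeProb_mem hp0 hp1 e).1
  have h1 := fun e : Sym2 (Fin n) => (edgeProb_mem hp0 hp1 e).2
  have hJ : cyclesUpTo (Fin n) J ⊆ cyclesUpTo (Fin n) n := by
    simpa using cyclesUpTo_subset_card (V := Fin n) J
  rw [gProb_acyclic]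
  refine (subsetExp_mono h0 h1 (avoidInd_anti hJ)).trans
    ((subsetExp_avoid_le h0 h1 _).trans (Real.exp_le_exp.2 ?_))
  rw [sum_prod_edgeProb]
  exact add_le_add_right (overlap_le J hc0 hcn) _

lemma tendsto_acyclic {c : ℝ} (hc0 : 0 < c) (hc1 : c < 1) :
    Tendsto (fun n : ℕ => gProb n (c / n) (fun G => totalCycleCount G = 0)) atTop
      (𝓝 (Real.exp (-(1 / 2 * Real.log (1 / (1 - c)) - c / 2 - c ^ 2 / 4)))) := by
  have hp : Tendsto (fun n : ℕ => c / (n : ℝ)) atTop (𝓝 0) :=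
    tendsto_const_div_atTop_nhds_zero_nat c
  rw [tendsto_order]
  constructor
  · intro x hx
    have hlow : Tendsto (fun n : ℕ => Real.exp (-(meanCycles n n (c / n) / (1 - c / n)))) atTop
        (𝓝 (Real.exp (-(1 / 2 * Real.log (1 / (1 - c)) - c / 2 - c ^ 2 / 4)))) := by
      have := (tendsto_meanCycles hc0 hc1).div (tendsto_const_nhds (x := (1 : ℝ)) |>.sub hp)
        (by norm_num)
      rw [sub_zero, div_one] at this
      exact (Real.continuous_exp.tendsto _).comp this.neg
    filter_upwards [hlow.eventually_const_lt hx, eventually_ge_atTop 1] with n hn hn1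
    refine hn.trans_le (acyclic_lower (by positivity) ?_)
    have : (1 : ℝ) ≤ n := by exact_mod_cast hn1
    rw [div_lt_one (by linarith)]
    linarith
  · intro x hx
    have hJ : Tendsto (fun J => Real.exp (-(∑ k ∈ range J, limitTerm c k))) atTop
        (𝓝 (Real.exp (-(1 / 2 * Real.log (1 / (1 - c)) - c / 2 - c ^ 2 / 4)))) :=
      (Real.continuous_exp.tendsto _).comp (hasSum_limitTerm hc0 hc1).tendsto_sum_nat.neg
    -- a length cutoff whose limiting bound is already below `x`
    obtain ⟨J, hJx⟩ := (hJ.eventually_lt_const hx).exists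
    set K := ∑ v ∈ range (2 * (J + 3)), (pairBound v : ℝ) * c ^ (v + 1) with hK
    have hup : Tendsto (fun n : ℕ => Real.exp (-meanCycles n J (c / n) + K / n)) atTop
        (𝓝 (Real.exp (-(∑ k ∈ range J, limitTerm c k)))) := by
      have := (tendsto_meanCycles_cutoff c J).neg.add (tendsto_const_div_atTop_nhds_zero_nat K)
      rw [add_zero] at this
      exact (Real.continuous_exp.tendsto _).comp this
    filter_upwards [hup.eventually_lt_const hJx, eventually_ge_atTop 1] with n hn hn1
    refine (acyclic_upper J hc0.le ?_).trans_lt hn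
    have : (1 : ℝ) ≤ n := by exact_mod_cast hn1
    linarith

end Asymptotics

/-- For `0 < c < 1`, the expected total number of cycles in `G(n,c/n)` converges to
`f(c) = (1/2)·ln(1/(1-c)) - c/2 - c²/4`, and the probability that `G(n,c/n)` has no cycle
converges to `e^{-f(c)} = e^{c/2+c²/4}·√(1-c)`. -/
theorem tendsto_expected_cycles_and_acyclic_prob (c : ℝ) (hc0 : 0 < c) (hc1 : c < 1) :
    Tendsto (fun n : ℕ => gExp n (min 1 (c / n)) (fun G => (totalCycleCount G : ℝ)))
      atTop (𝓝 (1 / 2 * Real.log (1 / (1 - c)) - c / 2 - c ^ 2 / 4)) ∧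
    Tendsto (fun n : ℕ => gProb n (min 1 (c / n)) (fun G => totalCycleCount G = 0))
      atTop (𝓝 (Real.exp (c / 2 + c ^ 2 / 4) * Real.sqrt (1 - c))) := by
  have hmin : ∀ᶠ n : ℕ in atTop, c / (n : ℝ) = min 1 (c / n) := by
    filter_upwards [eventually_ge_atTop 1] with n hn
    have : (1 : ℝ) ≤ n := by exact_mod_cast hn
    refine (min_eq_right ?_).symm
    rw [div_le_one (by linarith)]
    linarith
  constructor
  · refine (tendsto_meanCycles hc0 hc1).congr' ?_
    filter_upwards [hmin] with n hn
    rw [← hn, gExp_totalCycleCount]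
  · have hpos : 0 < 1 - c := by linarith
    have hlim : Real.exp (-(1 / 2 * Real.log (1 / (1 - c)) - c / 2 - c ^ 2 / 4))
        = Real.exp (c / 2 + c ^ 2 / 4) * Real.sqrt (1 - c) := by
      rw [Real.sqrt_eq_rpow, Real.rpow_def_of_pos hpos, ← Real.exp_add, one_div (1 - c),
        Real.log_inv]
      congr 1
      ring
    rw [← hlim]
    refine (tendsto_acyclic hc0 hc1).congr' ?_
    filter_upwards [hmin] with n hn
    rw [← hn]
end

section
/- Let 0 < c < 1 and let p : ℕ → [0,1] satisfy p(n)·n → c as n → ∞. Let |Frag_n| denote the number of vertices in the fragment of G(n,p(n)). Then lim_{n→∞} E[|Frag_n|] exists and is finite. -/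
/-!
Write `u k` for the number of unicyclic graphs on `k` labelled vertices. A `k`-set `S` is the vertex
set of a unicyclic component of `G(n,p)` exactly when the induced graph on `S` is unicyclic and no
edge leaves `S`, so by linearity of expectation

`E |Frag| = ∑ k, (n choose k) * k * u k * p ^ k * (1 - p) ^ ((n choose 2) - (n - k choose 2) - k)`

(`gExp_frag_eq`). For fixed `k`, if `p n → c` the `k`-th term tends to
`k * u k * (c e^{-c})^k / k!` (`tendsto_fragTerm`), and the limit of the sum is obtained by dominated
convergence. For the dominating series, a unicyclic graph is determined by a parent function
towards a root together with one further edge, so `u k ≤ k ^ k * k ^ 2` (`numUnicyclic_le`). Put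
`x = p n ≤ 1`. The estimates `k ^ k / k! ≤ e ^ k` and `(n)_k ≤ n ^ k * exp (-k (k - 1) / (2 n))` then
bound the `k`-th term by a constant times `k ^ 3 * (x e^{1-x}) ^ k` (`fragTerm_le`), even for `k` of
order `n`, and `c e^{1-c} < 1` since `c ≠ 1`.
-/

open Filter Topology

/-- A graph is unicyclic if it is connected and has as many edges as vertices
(equivalently, it is connected and contains exactly one cycle). -/
def IsUnicyclic {V : Type*} (G : SimpleGraph V) : Prop :=
  G.Connected ∧ G.edgeSet.ncard = Nat.card V

/-- The vertex set of the fragment of `G`: the union of the supports of the unicyclic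
connected components of `G`. -/
def fragSet {V : Type*} (G : SimpleGraph V) : Set V :=
  {v | IsUnicyclic (G.induce (G.connectedComponentMk v).supp)}

/-! ### The binomial weights and unicyclic components -/

/-- The sum over all graphs on a finite vertex type of the binomial weights is `1`. -/
lemma sum_binomial_weight {V : Type*} [Fintype V] [Fintype (SimpleGraph V)] (p : ℝ) :
    ∑ G : SimpleGraph V,
      p ^ G.edgeSet.ncard * (1 - p) ^ ((Fintype.card V).choose 2 - G.edgeSet.ncard) = 1 := by
  classical
  have h := Finset.sum_pow_mul_eq_add_pow p (1 - p) (⊤ : SimpleGraph V).edgeFinset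
  rw [add_sub_cancel, one_pow] at h
  refine Eq.trans ?_ h
  refine Finset.sum_bij' (fun G _ => G.edgeFinset)
    (fun t _ => SimpleGraph.fromEdgeSet (t : Set (Sym2 V))) ?_ ?_ ?_ ?_ ?_
  · intro G _
    rw [Finset.mem_powerset]
    exact SimpleGraph.edgeFinset_mono le_top
  · intro t _
    exact Finset.mem_univ _
  · intro G _
    simp
  · intro t ht
    rw [Finset.mem_powerset] at ht
    apply Finset.coe_injective
    rw [SimpleGraph.coe_edgeFinset, SimpleGraph.edgeSet_fromEdgeSet]
    ext e
    simp only [Set.mem_sdiff, Finset.mem_coe, and_iff_left_iff_imp]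
    intro he
    have := ht he
    simpa using this
  · intro G _
    rw [SimpleGraph.card_edgeFinset_top_eq_card_choose_two,
      Set.ncard_eq_toFinset_card', SimpleGraph.edgeFinset]

lemma ncard_edgeSet_le {V : Type*} [Fintype V] (G : SimpleGraph V) :
    G.edgeSet.ncard ≤ (Fintype.card V).choose 2 := by
  classical
  have := G.card_edgeFinset_le_card_choose_two
  rwa [SimpleGraph.edgeFinset, ← Set.ncard_eq_toFinset_card'] at this

lemma ncard_edgeSet_iso {V W : Type*} {G : SimpleGraph V} {H : SimpleGraph W} (e : G ≃g H) :
    G.edgeSet.ncard = H.edgeSet.ncard :=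
  Nat.card_congr e.mapEdgeSet

lemma isUnicyclic_iso {V W : Type*} {G : SimpleGraph V} {H : SimpleGraph W} (e : G ≃g H) :
    IsUnicyclic G ↔ IsUnicyclic H := by
  unfold IsUnicyclic
  rw [e.connected_iff, ncard_edgeSet_iso e, Nat.card_congr e.toEquiv]

/-- The number of unicyclic graphs on the vertex set `{0, …, k - 1}`. -/
noncomputable def numUnicyclic (k : ℕ) : ℕ :=
  Nat.card {G : SimpleGraph (Fin k) // IsUnicyclic G}

lemma card_unicyclic {V : Type*} [Fintype V] :
    Nat.card {G : SimpleGraph V // IsUnicyclic G} = numUnicyclic (Fintype.card V) := by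
  let e := (Fintype.equivFin V)
  refine Nat.card_congr (e.simpleGraph.subtypeEquiv fun G => ?_)
  exact isUnicyclic_iso (SimpleGraph.Iso.comap e.symm G).symm

/-- `S` is the vertex set of a unicyclic component of `G`: it induces a unicyclic graph and no edge
leaves it. -/
def IsUnicyclicComp {V : Type*} (S : Set V) (G : SimpleGraph V) : Prop :=
  IsUnicyclic (G.induce S) ∧ ∀ u ∈ S, ∀ v ∉ S, ¬ G.Adj u v

/-- A set satisfying `IsUnicyclicComp` is the full component of any of its vertices. -/
lemma IsUnicyclicComp.eq_supp {V : Type*} {S : Set V} {G : SimpleGraph V}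
    (h : IsUnicyclicComp S G) {v : V} (hv : v ∈ S) : S = (G.connectedComponentMk v).supp := by
  ext w
  rw [SimpleGraph.ConnectedComponent.mem_supp_iff, SimpleGraph.ConnectedComponent.eq]
  constructor
  · intro hw
    have := h.1.1.preconnected ⟨w, hw⟩ ⟨v, hv⟩
    exact this.map (SimpleGraph.Embedding.induce S).toHom
  · rintro ⟨q⟩
    induction q with
    | nil => exact hv
    | @cons a b c hab q ih =>
      by_contra ha
      exact h.2 _ (ih hv) _ ha hab.symm

lemma mem_fragSet_iff {V : Type*} {G : SimpleGraph V} {v : V} :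
    v ∈ fragSet G ↔ IsUnicyclicComp (G.connectedComponentMk v).supp G := by
  refine ⟨fun h => ⟨h, ?_⟩, fun h => h.1⟩
  intro u hu w hw huw
  apply hw
  rw [SimpleGraph.ConnectedComponent.mem_supp_iff] at hu ⊢
  rw [← hu, SimpleGraph.ConnectedComponent.eq]
  exact huw.symm.reachable

open scoped Classical in
/-- The unicyclic components partition the fragment. -/
lemma ncard_fragSet {V : Type*} [Fintype V] (G : SimpleGraph V) :
    ((fragSet G).ncard : ℝ) =
      ∑ S : Finset V, if IsUnicyclicComp (S : Set V) G then (S.card : ℝ) else 0 := by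
  have h1 : ((fragSet G).ncard : ℝ) = ∑ v : V, if v ∈ fragSet G then (1 : ℝ) else 0 := by
    rw [Set.ncard_eq_toFinset_card', Finset.sum_boole]
    congr 2
    ext v
    simp
  have h2 : ∀ S : Finset V, (if IsUnicyclicComp (S : Set V) G then (S.card : ℝ) else 0) =
      ∑ v : V, if v ∈ S ∧ IsUnicyclicComp (S : Set V) G then (1 : ℝ) else 0 := by
    intro S
    split_ifs with h <;> simp [h]
  rw [h1, Finset.sum_congr rfl fun S _ => h2 S, Finset.sum_comm]
  refine Finset.sum_congr rfl fun v _ => ?_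
  by_cases hv : v ∈ fragSet G
  · rw [if_pos hv, Finset.sum_eq_single (G.connectedComponentMk v).supp.toFinset]
    · rw [if_pos]
      refine ⟨by simp, ?_⟩
      rw [Set.coe_toFinset]
      exact mem_fragSet_iff.1 hv
    · intro S _ hS
      rw [if_neg]
      rintro ⟨hvS, hE⟩
      apply hS
      apply Finset.coe_injective
      rw [Set.coe_toFinset]
      exact hE.eq_supp hvS
    · simp
  · rw [if_neg hv, Finset.sum_eq_zero]
    intro S _
    rw [if_neg]
    rintro ⟨hvS, hE⟩
    apply hv
    rw [mem_fragSet_iff]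
    rwa [hE.eq_supp (v := v) hvS] at hE

/-! ### Expected size of the fragment as a sum over component sizes -/

/-- The graph on `V` obtained from a graph on `S` and a graph on `Sᶜ`, with no edges in between. -/
def glue {V : Type*} (S : Set V) (A : SimpleGraph S) (B : SimpleGraph (Sᶜ : Set V)) :
    SimpleGraph V :=
  A.spanningCoe ⊔ B.spanningCoe

lemma glue_adj {V : Type*} {S : Set V} {A : SimpleGraph S} {B : SimpleGraph (Sᶜ : Set V)}
    {u v : V} : (glue S A B).Adj u v ↔
      (∃ hu : u ∈ S, ∃ hv : v ∈ S, A.Adj ⟨u, hu⟩ ⟨v, hv⟩) ∨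
      (∃ hu : u ∉ S, ∃ hv : v ∉ S, B.Adj ⟨u, hu⟩ ⟨v, hv⟩) := by
  unfold glue
  rw [SimpleGraph.sup_adj, SimpleGraph.map_adj, SimpleGraph.map_adj]
  constructor
  · rintro (⟨a, b, h, rfl, rfl⟩ | ⟨a, b, h, rfl, rfl⟩)
    · exact Or.inl ⟨a.2, b.2, h⟩
    · exact Or.inr ⟨a.2, b.2, h⟩
  · rintro (⟨hu, hv, h⟩ | ⟨hu, hv, h⟩)
    · exact Or.inl ⟨_, _, h, rfl, rfl⟩
    · exact Or.inr ⟨_, _, h, rfl, rfl⟩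

lemma ncard_edgeSet_glue {V : Type*} [Finite V] (S : Set V) (A : SimpleGraph S)
    (B : SimpleGraph (Sᶜ : Set V)) :
    (glue S A B).edgeSet.ncard = A.edgeSet.ncard + B.edgeSet.ncard := by
  unfold glue
  rw [SimpleGraph.edgeSet_sup, Set.ncard_union_eq _ (Set.toFinite _) (Set.toFinite _)]
  · congr 1
    · rw [SimpleGraph.spanningCoe, SimpleGraph.edgeSet_map]
      exact Set.ncard_image_of_injective _ (Function.Embedding.sym2Map _).injective
    · rw [SimpleGraph.spanningCoe, SimpleGraph.edgeSet_map]
      exact Set.ncard_image_of_injective _ (Function.Embedding.sym2Map _).injective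
  · rw [SimpleGraph.disjoint_edgeSet, SimpleGraph.disjoint_left]
    intro u v h1 h2
    rw [SimpleGraph.map_adj] at h1 h2
    obtain ⟨a, _, _, rfl, _⟩ := h1
    obtain ⟨b, _, _, hb, _⟩ := h2
    exact b.2 (by rw [show (b : V) = a from hb]; exact a.2)

lemma induce_glue {V : Type*} (S : Set V) (A : SimpleGraph S) (B : SimpleGraph (Sᶜ : Set V)) :
    (glue S A B).induce S = A := by
  ext u v
  rw [SimpleGraph.induce_adj, glue_adj]
  simp [u.2, v.2]

lemma induce_compl_glue {V : Type*} (S : Set V) (A : SimpleGraph S)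
    (B : SimpleGraph (Sᶜ : Set V)) : (glue S A B).induce Sᶜ = B := by
  ext u v
  have hu : (u : V) ∉ S := u.2
  have hv : (v : V) ∉ S := v.2
  rw [SimpleGraph.induce_adj, glue_adj]
  simp [hu, hv]

lemma glue_induce {V : Type*} {S : Set V} {G : SimpleGraph V}
    (h : ∀ u ∈ S, ∀ v ∉ S, ¬ G.Adj u v) : glue S (G.induce S) (G.induce Sᶜ) = G := by
  ext u v
  rw [glue_adj]
  constructor
  · rintro (⟨_, _, h⟩ | ⟨_, _, h⟩) <;> exact h
  · intro huv
    by_cases hu : u ∈ S <;> by_cases hv : v ∈ S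
    · exact Or.inl ⟨hu, hv, huv⟩
    · exact absurd huv (h u hu v hv)
    · exact absurd huv.symm (h v hv u hu)
    · exact Or.inr ⟨hu, hv, huv⟩

/-- A unicyclic component on `T` fixes all pairs meeting `T`, which number
`(n choose 2) - (n - k choose 2)`; the graph outside `T` is again binomial and sums out. -/
lemma sum_weight_unicyclicComp (n : ℕ) (p : ℝ) [Fintype (SimpleGraph (Fin n))]
    (T : Set (Fin n)) [DecidablePred (IsUnicyclicComp T)] {k : ℕ} (hk : Nat.card T = k) :
    ∑ G : SimpleGraph (Fin n),
      (if IsUnicyclicComp T G then gWeight n p G else 0) =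
    numUnicyclic k * (p ^ k *
      (1 - p) ^ (n.choose 2 - (n - k).choose 2 - k)) := by
  classical
  have hcT : Fintype.card T = k := by rw [← hk, Nat.card_eq_fintype_card]
  have hcTc : Fintype.card (Tᶜ : Set (Fin n)) = n - k := by
    rw [Fintype.card_compl_set, hcT, Fintype.card_fin]
  let : Fintype (SimpleGraph T) := Fintype.ofFinite _
  let : Fintype (SimpleGraph (Tᶜ : Set (Fin n))) := Fintype.ofFinite _
  have hw : ∀ (A : SimpleGraph T) (B : SimpleGraph (Tᶜ : Set (Fin n))), IsUnicyclic A →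
      gWeight n p (glue T A B) =
        (p ^ k * (1 - p) ^ (n.choose 2 - (n - k).choose 2 - k)) *
        (p ^ B.edgeSet.ncard *
          (1 - p) ^ ((Fintype.card (Tᶜ : Set (Fin n))).choose 2 - B.edgeSet.ncard)) := by
    intro A B hA
    have hAc : A.edgeSet.ncard = k := by
      rw [hA.2, Nat.card_eq_fintype_card, hcT]
    have hBc := ncard_edgeSet_le B
    -- Gluing `A` to a complete graph shows that `k` pairs are left over, so that the truncated
    -- subtractions in the exponents are genuine.
    have hG := ncard_edgeSet_le (glue T A ⊤)
    have htop : (⊤ : SimpleGraph (Tᶜ : Set (Fin n))).edgeSet.ncard =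
        (n - k).choose 2 := by
      have := SimpleGraph.card_edgeFinset_top_eq_card_choose_two
        (V := (Tᶜ : Set (Fin n)))
      rwa [SimpleGraph.edgeFinset, ← Set.ncard_eq_toFinset_card', hcTc] at this
    rw [ncard_edgeSet_glue, hAc, htop, Fintype.card_fin] at hG
    rw [hcTc] at hBc ⊢
    unfold gWeight
    rw [ncard_edgeSet_glue, hAc, pow_add, mul_mul_mul_comm, ← pow_add, ← pow_add]
    congr 2
    omega
  rw [← Finset.sum_filter]
  have hbij : ∑ G : SimpleGraph (Fin n) with IsUnicyclicComp T G, gWeight n p G =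
      ∑ x ∈ ({A : SimpleGraph T | IsUnicyclic A} : Finset _) ×ˢ
        (Finset.univ : Finset (SimpleGraph (Tᶜ : Set (Fin n)))),
        gWeight n p (glue T x.1 x.2) := by
    refine Finset.sum_bij' (fun G _ => (G.induce T, G.induce Tᶜ)) (fun x _ => glue T x.1 x.2)
      ?_ ?_ ?_ ?_ ?_
    · intro G hG
      have h := (Finset.mem_filter.1 hG).2
      simp [h.1]
    · intro x hx
      simp only [Finset.mem_product, Finset.mem_filter, Finset.mem_univ, true_and,
        and_true] at hx ⊢
      refine ⟨by rwa [induce_glue], ?_⟩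
      intro u hu v hv
      rw [glue_adj]
      tauto
    · intro G hG
      exact glue_induce (Finset.mem_filter.1 hG).2.2
    · intro x _
      simp only [induce_glue, induce_compl_glue]
    · intro G hG
      simp only [glue_induce (Finset.mem_filter.1 hG).2.2]
  rw [hbij, Finset.sum_product]
  have hnum : (numUnicyclic k : ℝ) =
      (({A : SimpleGraph T | IsUnicyclic A} : Finset _).card : ℝ) := by
    rw [← hcT, ← card_unicyclic, Nat.card_eq_fintype_card, Fintype.card_subtype]
  rw [hnum, ← nsmul_eq_mul]
  refine Finset.sum_eq_card_nsmul fun A hA => ?_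
  rw [Finset.sum_congr rfl fun B _ => hw A B (Finset.mem_filter.1 hA).2, ← Finset.mul_sum,
    sum_binomial_weight, mul_one]

/-- The contribution of the unicyclic components with `k` vertices to the expected size of the
fragment of `G(n,p)`. -/
noncomputable def fragTerm (n : ℕ) (p : ℝ) (k : ℕ) : ℝ :=
  n.choose k * (k * (numUnicyclic k * (p ^ k *
    (1 - p) ^ (n.choose 2 - (n - k).choose 2 - k))))

/-- The terms with `k > n` vanish because `n.choose k = 0`, so the series is a finite sum. -/
lemma gExp_frag_eq (n : ℕ) (p : ℝ) :
    gExp n p (fun G => ((fragSet G).ncard : ℝ)) = ∑' k, fragTerm n p k := by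
  classical
  let : Fintype (SimpleGraph (Fin n)) := Fintype.ofFinite _
  unfold gExp
  rw [finsum_eq_sum_of_fintype]
  simp_rw [ncard_fragSet, Finset.mul_sum]
  rw [Finset.sum_comm]
  have h : ∀ S : Finset (Fin n), ∑ G : SimpleGraph (Fin n),
      gWeight n p G * (if IsUnicyclicComp (S : Set (Fin n)) G then (S.card : ℝ) else 0) =
      (S.card * (numUnicyclic S.card * (p ^ S.card *
        (1 - p) ^ (n.choose 2 - (n - S.card).choose 2 - S.card))) : ℝ) := by
    intro S
    rw [← sum_weight_unicyclicComp n p (S : Set (Fin n)) (by simp), Finset.mul_sum]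
    refine Finset.sum_congr rfl fun G _ => ?_
    split_ifs <;> ring
  rw [Finset.sum_congr rfl fun S _ => h S, ← Finset.powerset_univ,
    Finset.sum_powerset_apply_card (fun k => ((k : ℝ) * (numUnicyclic k * (p ^ k *
        (1 - p) ^ (n.choose 2 - (n - k).choose 2 - k))) : ℝ)), Finset.card_univ,
    Fintype.card_fin, tsum_eq_sum (s := Finset.range (n + 1))]
  · refine Finset.sum_congr rfl fun k _ => ?_
    rw [nsmul_eq_mul, fragTerm]
  · intro k hk
    rw [Finset.mem_range, not_lt] at hk
    rw [fragTerm, Nat.choose_eq_zero_of_lt (by omega)]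
    simp

/-! ### Counting unicyclic graphs -/

/-- Rooting at `0`, every other vertex `v` of a connected graph has a neighbour `f v` closer to the
root, which accounts for `k - 1` edges. A unicyclic graph is thus determined by `f` together with
one more edge. -/
lemma numUnicyclic_le (k : ℕ) : numUnicyclic k ≤ k ^ k * k ^ 2 := by
  classical
  rcases Nat.eq_zero_or_pos k with rfl | hk
  · have : IsEmpty {G : SimpleGraph (Fin 0) // IsUnicyclic G} :=
      ⟨fun G => (G.2.1.nonempty).elim fun x => x.elim0⟩
    simp [numUnicyclic]
  have : NeZero k := ⟨hk.ne'⟩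
  let Φ : (Fin k → Fin k) × (Fin k × Fin k) → SimpleGraph (Fin k) := fun x =>
    SimpleGraph.fromEdgeSet ((fun v => s(v, x.1 v)) '' {v | v ≠ 0} ∪ {s(x.2.1, x.2.2)})
  have key : ∀ G : SimpleGraph (Fin k), IsUnicyclic G → ∃ x, Φ x = G := by
    intro G hG
    have hpar : ∀ v : Fin k, ∃ w, v ≠ 0 → G.Adj v w ∧ G.dist v 0 = G.dist w 0 + 1 := by
      intro v
      by_cases hv : v = 0
      · exact ⟨0, fun h => absurd hv h⟩
      obtain ⟨q, hq⟩ := hG.1.exists_walk_length_eq_dist v 0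
      cases q with
      | nil => exact absurd rfl hv
      | @cons _ w _ hvw q =>
        refine ⟨w, fun _ => ⟨hvw, ?_⟩⟩
        rw [SimpleGraph.Walk.length_cons] at hq
        have h1 := SimpleGraph.dist_le q
        have h2 := hG.1.dist_triangle (u := v) (v := w) (w := 0)
        have h3 : G.dist v w = 1 := SimpleGraph.dist_eq_one_iff_adj.2 hvw
        omega
    choose f hf using hpar
    set I : Set (Sym2 (Fin k)) := (fun v => s(v, f v)) '' {v | v ≠ 0} with hI
    have hIsub : I ⊆ G.edgeSet := by
      rintro _ ⟨v, hv, rfl⟩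
      exact (hf v hv).1
    have hinj : Set.InjOn (fun v => s(v, f v)) {v | v ≠ 0} := by
      intro v hv w hw h
      simp only [Sym2.eq_iff] at h
      rcases h with h | ⟨h1, h2⟩
      · exact h.1
      · have a := (hf v hv).2
        have b := (hf w hw).2
        rw [h2] at a
        rw [← h1] at b
        omega
    have hIcard : I.ncard = k - 1 := by
      rw [hI, hinj.ncard_image]
      have : {v : Fin k | v ≠ 0} = ({0} : Set (Fin k))ᶜ := by ext; simp
      rw [this, Set.ncard_compl, Set.ncard_singleton, Nat.card_fin]
    have hdiff : (G.edgeSet \ I).ncard = 1 := by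
      rw [Set.ncard_sdiff hIsub, hIcard, hG.2, Nat.card_fin]
      omega
    obtain ⟨e, he⟩ := Set.ncard_eq_one.1 hdiff
    induction e with
    | _ a b =>
    refine ⟨(f, (a, b)), ?_⟩
    simp only [Φ]
    rw [← hI, ← he, Set.union_sdiff_cancel hIsub, SimpleGraph.fromEdgeSet_edgeSet]
  have hle : numUnicyclic k ≤ Nat.card ((Fin k → Fin k) × (Fin k × Fin k)) := by
    choose g hg using key
    refine Nat.card_le_card_of_injective (fun G => g G.1 G.2) ?_
    intro G H hGH
    apply Subtype.ext
    rw [← hg G.1 G.2, ← hg H.1 H.2]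
    exact congrArg Φ hGH
  refine hle.trans_eq ?_
  simp [Nat.card_eq_fintype_card, sq]

/-! ### Asymptotics of the terms and domination -/

lemma choose_two_add (j k : ℕ) : (j + k).choose 2 = j.choose 2 + k * j + k.choose 2 := by
  induction k with
  | zero => simp
  | succ k ih =>
    rw [← add_assoc, Nat.choose_succ_succ' (j + k) 1, Nat.choose_succ_succ' k 1, ih,
      Nat.choose_one_right, Nat.choose_one_right]
    ring

lemma tendsto_fragTerm {c : ℝ} {p : ℕ → ℝ}
    (hpc : Tendsto (fun n : ℕ => p n * n) atTop (𝓝 c)) (k : ℕ) :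
    Tendsto (fun n => fragTerm n (p n) k) atTop
      (𝓝 (k * (numUnicyclic k * (c ^ k / k.factorial * Real.exp (-c) ^ k)))) := by
  have hp0 : Tendsto p atTop (𝓝 0) := by
    have h := hpc.mul (tendsto_inv_atTop_nhds_zero_nat (𝕜 := ℝ))
    rw [mul_zero] at h
    refine h.congr' ?_
    filter_upwards [eventually_gt_atTop 0] with n hn
    have : (n : ℝ) ≠ 0 := by positivity
    field_simp
  have hq : Tendsto (fun n => 1 - p n) atTop (𝓝 1) := by
    simpa using hp0.const_sub 1
  have hA : Tendsto (fun n : ℕ => (n.choose k : ℝ) * p n ^ k) atTop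
      (𝓝 (c ^ k / k.factorial)) := by
    have h1 : Tendsto (fun n : ℕ => (n : ℝ) ^ k / k.factorial * p n ^ k) atTop
        (𝓝 (c ^ k / k.factorial)) := by
      refine ((hpc.pow k).div_const _).congr fun n => ?_
      rw [mul_pow]
      ring
    exact (((isEquivalent_choose k).mul Asymptotics.IsEquivalent.refl).tendsto_nhds_iff).2 h1
  have hB : Tendsto (fun n : ℕ => (1 - p n) ^ (n.choose 2 - (n - k).choose 2 - k)) atTop
      (𝓝 (Real.exp (-c) ^ k)) := by
    have h1 : Tendsto (fun n : ℕ => (1 - p n) ^ n) atTop (𝓝 (Real.exp (-c))) := by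
      have := Real.tendsto_one_add_pow_exp_of_tendsto (g := fun n => - p n) (t := -c) (by
        refine hpc.neg.congr fun n => ?_
        ring)
      simpa [sub_eq_add_neg] using this
    -- For `n > k` the exponent equals `n k + (k choose 2) - (k² + k)`.
    have h2 := ((h1.pow k).mul (hq.pow (k.choose 2))).div (hq.pow (k * k + k)) (by simp)
    simp only [one_pow, mul_one, div_one] at h2
    refine h2.congr' ?_
    filter_upwards [eventually_gt_atTop k, hq.eventually_ne one_ne_zero] with n hn hqn
    obtain ⟨j, rfl⟩ := Nat.exists_eq_add_of_lt hn
    rw [Pi.div_apply, div_eq_iff (pow_ne_zero _ hqn), ← pow_mul, ← pow_add, ← pow_add]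
    congr 1
    have h3 : k + j + 1 - k = j + 1 := by omega
    have h4 := choose_two_add (j + 1) k
    rw [show j + 1 + k = k + j + 1 by ring] at h4
    rw [h3, h4]
    have h5 : (k + j + 1) * k = k * k + k * j + k := by ring
    have h6 : k * (j + 1) = k * j + k := by ring
    rw [h5, h6]
    omega
  refine (((hA.mul hB).const_mul (numUnicyclic k : ℝ)).const_mul (k : ℝ)).congr fun n => ?_
  rw [fragTerm]
  ring

lemma descFactorial_le (n k : ℕ) (hn : 0 < n) :
    (n.descFactorial k : ℝ) ≤ n ^ k * Real.exp (-(k * (k - 1) / (2 * n))) := by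
  have hn' : (0 : ℝ) < n := by exact_mod_cast hn
  induction k with
  | zero => simp
  | succ k ih =>
    have h1 : ((n - k : ℕ) : ℝ) ≤ n * Real.exp (-(k / n)) := by
      rcases le_total k n with h | h
      · rw [Nat.cast_sub h]
        have := Real.add_one_le_exp (-(k / n : ℝ))
        calc (n : ℝ) - k = n * (-(k / n : ℝ) + 1) := by field_simp; ring
          _ ≤ _ := by gcongr
      · rw [Nat.sub_eq_zero_of_le h, Nat.cast_zero]
        positivity
    rw [Nat.descFactorial_succ, Nat.cast_mul]
    calc ((n - k : ℕ) : ℝ) * n.descFactorial k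
        ≤ (n * Real.exp (-(k / n))) * (n ^ k * Real.exp (-(k * (k - 1) / (2 * n)))) := by gcongr
      _ = n ^ (k + 1) * (Real.exp (-(k / n)) * Real.exp (-(k * (k - 1) / (2 * n)))) := by ring
      _ = _ := by
        rw [← Real.exp_add]
        congr 2
        push_cast
        field_simp
        ring

/-- The quadratic terms in the exponent, `-k² / (2n)` from the binomial coefficient and
`p k² / 2` from the pairs inside the component, add up to at most `0` because `p n ≤ 1`; the linear
ones are bounded since `k ≤ n`. -/
lemma fragTerm_le {n : ℕ} {p : ℝ} (hp0 : 0 ≤ p) (hp1 : p ≤ 1) (hpn : p * n ≤ 1) (k : ℕ) :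
    fragTerm n p k ≤ Real.exp 2 * (k ^ 3 * (p * n * Real.exp (1 - p * n)) ^ k) := by
  rcases lt_or_ge n k with hnk | hkn
  · rw [fragTerm, Nat.choose_eq_zero_of_lt hnk]
    simp only [Nat.cast_zero, zero_mul]
    positivity
  rcases Nat.eq_zero_or_pos k with rfl | hk
  · simp [fragTerm]
  have hn : 0 < n := by omega
  have hn' : (0 : ℝ) < n := by exact_mod_cast hn
  have hkn' : (k : ℝ) ≤ n := by exact_mod_cast hkn
  have hk' : (0 : ℝ) < k := by exact_mod_cast hk
  set m := n.choose 2 - (n - k).choose 2 - k with hm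
  -- Truncated subtraction only makes `m` larger, so the real-valued lower bound always holds.
  have hmk : (n : ℝ) * k - k * (k + 1) / 2 - k ≤ m := by
    have h1 : n.choose 2 ≤ m + k + (n - k).choose 2 := by omega
    have h2 : ((n.choose 2 : ℕ) : ℝ) ≤ m + k + ((n - k).choose 2 : ℕ) := by exact_mod_cast h1
    rw [Nat.cast_choose_two, Nat.cast_choose_two, Nat.cast_sub hkn] at h2
    linarith
  have hq : (1 - p) ^ m ≤ Real.exp (-(p * (n * k - k * (k + 1) / 2 - k))) := by
    calc (1 - p) ^ m ≤ Real.exp (-p) ^ m := by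
          have := Real.add_one_le_exp (-p)
          have h0 : 0 ≤ 1 - p := by linarith
          gcongr
          linarith
      _ = Real.exp (-(p * m)) := by
          rw [← Real.exp_nat_mul]
          congr 1
          ring
      _ ≤ _ := by gcongr
  have hch : (n.choose k : ℝ) ≤
      n ^ k / k.factorial * Real.exp (-(k * (k - 1) / (2 * n))) := by
    rw [Nat.choose_eq_descFactorial_div_factorial,
      Nat.cast_div (n.factorial_dvd_descFactorial k) (mod_cast k.factorial_ne_zero),
      div_mul_eq_mul_div]
    gcongr
    exact descFactorial_le n k hn
  have hu : (numUnicyclic k : ℝ) ≤ k ^ k * k ^ 2 := by exact_mod_cast numUnicyclic_le k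
  have hkk : (k : ℝ) ^ k / k.factorial ≤ Real.exp k := Real.pow_div_factorial_le_exp (k : ℝ) hk'.le k
  have hq0 : 0 ≤ (1 - p) ^ m := pow_nonneg (by linarith) _
  have hexp : Real.exp k * Real.exp (-(k * (k - 1) / (2 * n))) *
      Real.exp (-(p * (n * k - k * (k + 1) / 2 - k))) ≤ Real.exp 2 * Real.exp (1 - p * n) ^ k := by
    rw [← Real.exp_add, ← Real.exp_add, ← Real.exp_nat_mul, ← Real.exp_add, Real.exp_le_exp]
    have e1 : p * k ≤ 1 := by nlinarith
    have e2 : p * (k * k) ≤ k * k / n := by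
      rw [le_div_iff₀ hn']
      nlinarith [mul_pos hk' hk']
    have e3 : (k : ℝ) / n ≤ 1 := by rwa [div_le_one hn']
    have e4 : (k * (k - 1) / (2 * n) : ℝ) = (k * k / n - k / n) / 2 := by
      field_simp
    rw [e4]
    nlinarith
  calc fragTerm n p k
      ≤ (n ^ k / k.factorial * Real.exp (-(k * (k - 1) / (2 * n)))) * (k * ((k ^ k * k ^ 2) *
          (p ^ k * Real.exp (-(p * (n * k - k * (k + 1) / 2 - k)))))) := by
        rw [fragTerm, ← hm]
        gcongr
    _ = k ^ 3 * (p * n) ^ k * ((k ^ k / k.factorial) *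
          Real.exp (-(k * (k - 1) / (2 * n))) *
          Real.exp (-(p * (n * k - k * (k + 1) / 2 - k)))) := by
        rw [mul_pow]
        ring
    _ ≤ k ^ 3 * (p * n) ^ k * (Real.exp k *
          Real.exp (-(k * (k - 1) / (2 * n))) *
          Real.exp (-(p * (n * k - k * (k + 1) / 2 - k)))) := by
        gcongr
    _ ≤ k ^ 3 * (p * n) ^ k * (Real.exp 2 * Real.exp (1 - p * n) ^ k) := by gcongr
    _ = _ := by
        rw [mul_pow (p * n)]
        ring

/-- For `0 < c < 1` and `p(n)·n → c`, the expected number of vertices in the fragment of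
`G(n,p(n))` converges to a finite limit. -/
theorem tendsto_expected_frag_size (c : ℝ) (hc0 : 0 < c) (hc1 : c < 1)
    (p : ℕ → ℝ) (hp : ∀ n, p n ∈ Set.Icc (0 : ℝ) 1)
    (hpc : Tendsto (fun n : ℕ => p n * n) atTop (𝓝 c)) :
    ∃ L : ℝ,
      Tendsto (fun n : ℕ => gExp n (p n) (fun G => ((fragSet G).ncard : ℝ))) atTop (𝓝 L) := by
  simp_rw [gExp_frag_eq]
  -- The strict inequality `c e^{1-c} < 1` leaves room for a uniform geometric ratio `r`.
  have hc : c * Real.exp (1 - c) < 1 := by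
    have h := Real.add_one_lt_exp (x := c - 1) (by linarith)
    rw [← neg_sub, Real.exp_neg, ← div_eq_mul_inv, div_lt_one (Real.exp_pos _)]
    linarith
  obtain ⟨r, hr, hr1⟩ := exists_between hc
  have hr0 : 0 < r := lt_trans (by positivity) hr
  have hlim : Tendsto (fun n : ℕ => p n * n * Real.exp (1 - p n * n)) atTop
      (𝓝 (c * Real.exp (1 - c))) :=
    hpc.mul ((Real.continuous_exp.tendsto _).comp (hpc.const_sub 1))
  have hrn : ‖r‖ < 1 := by rwa [Real.norm_of_nonneg hr0.le]
  have hgeom : Summable (fun k : ℕ => (k : ℝ) ^ 3 * r ^ k) :=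
    summable_pow_mul_geometric_of_norm_lt_one 3 hrn
  have hsum : Summable (fun k : ℕ => Real.exp 2 * ((k : ℝ) ^ 3 * r ^ k)) := hgeom.mul_left _
  refine ⟨_, tendsto_tsum_of_dominated_convergence (f := fun n k => fragTerm n (p n) k)
    hsum (tendsto_fragTerm hpc) ?_⟩
  filter_upwards [hlim.eventually_lt_const hr, hpc.eventually_lt_const hc1] with n h1 h2 k
  obtain ⟨hp0, hp1⟩ := hp n
  have hq0 : 0 ≤ 1 - p n := by linarith
  rw [Real.norm_of_nonneg (by unfold fragTerm; positivity)]
  refine (fragTerm_le hp0 hp1 h2.le k).trans ?_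
  gcongr
end
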